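/- Let s > 1 and let u, v be harmonic functions in the exterior Ω of the unit sphere 𝕊 ⊂ ℝ³, continuous up to 𝕊, tending to 0 as |x| → ∞, and with boundary traces u|_𝕊, v|_𝕊 ∈ H^{s+1}_ax(𝕊). Then |∇u|² and |∇v|² restricted to 𝕊 belong to H^s_ax(𝕊) and there is a constant C > 0 independent of u, v such that ‖|∇u|²‖_{H^s(𝕊)} ≤ C ‖u‖²_{H^{s+1}(𝕊)} and ‖|∇u|² − |∇v|²‖_{H^s(𝕊)} ≤ C (‖u‖_{H^{s+1}(𝕊)} + ‖v‖_{H^{s+1}(𝕊)}) ‖u − v‖_{H^{s+1}(𝕊)}. -/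

import Mathlib

noncomputable section

open MeasureTheory Real Filter

/-- The Legendre polynomial of degree `n`, via Rodrigues' formula. -/
def legendreP (n : ℕ) : Polynomial ℝ :=
  Polynomial.C ((2 ^ n * n.factorial : ℝ)⁻¹) *
    Polynomial.derivative^[n] ((Polynomial.X ^ 2 - 1) ^ n)

/-- The associated Legendre function `P_l^m` (with Condon–Shortley phase),
so that `P_{|m|+2k}^{|m|}(0) = (-1)^{|m|+k} (2|m|+2k-1)!!/(2k)!!`. -/
def assocLegendre (l m : ℕ) (x : ℝ) : ℝ :=
  (-1 : ℝ) ^ m * (1 - x ^ 2) ^ ((m : ℝ) / 2) *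
    (Polynomial.derivative^[m] (legendreP l)).eval x

/-- The normalizing constant `α_l^m` of the spherical harmonics. -/
def alphaY (l : ℕ) (m : ℤ) : ℝ :=
  (-1 : ℝ) ^ ((m + |m|) / 2) *
    Real.sqrt ((2 * l + 1) * (l - m.natAbs).factorial /
      (4 * Real.pi * (l + m.natAbs).factorial))

/-- The spherical harmonic `Y_l^m` in latitude/longitude coordinates `(θ, φ)`. -/
def Ylm (l : ℕ) (m : ℤ) (θ φ : ℝ) : ℂ :=
  ((alphaY l m * assocLegendre l m.natAbs (Real.sin θ) : ℝ) : ℂ) *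
    Complex.exp (Complex.I * m * φ)

/-- The surface measure `dS = cos θ dθ dφ` of the unit sphere, in the coordinate box
`[-π/2, π/2] × [-π, π)`. -/
def sphereMeasure : Measure (ℝ × ℝ) :=
  ((volume : Measure (ℝ × ℝ)).restrict
      (Set.Icc (-(Real.pi / 2)) (Real.pi / 2) ×ˢ Set.Ico (-Real.pi) Real.pi)).withDensity
    fun p => ENNReal.ofReal (Real.cos p.1)

/-- The Fourier–Laplace coefficient `ψ̂_l^m = ∫_𝕊 ψ conj(Y_l^m) dS`. -/
def flCoeff (ψ : ℝ → ℝ → ℂ) (l : ℕ) (m : ℤ) : ℂ :=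
  ∫ p : ℝ × ℝ, ψ p.1 p.2 * (starRingEnd ℂ) (Ylm l m p.1 p.2) ∂sphereMeasure

/-- Membership in the fractional Sobolev space `H^s(𝕊)`:
`ψ ∈ L²(𝕊)` and `Σ_{l,m} (l+1)^{2s} |ψ̂_l^m|² < ∞`.
(The coefficients with `|m| > l` vanish automatically.) -/
def MemHs (s : ℝ) (ψ : ℝ → ℝ → ℂ) : Prop :=
  MeasureTheory.MemLp (fun p : ℝ × ℝ => ψ p.1 p.2) 2 sphereMeasure ∧
    Summable fun p : ℕ × ℤ =>
      ((p.1 : ℝ) + 1) ^ (2 * s) * ‖flCoeff ψ p.1 p.2‖ ^ 2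

/-- The `H^s(𝕊)` norm. -/
def HsNorm (s : ℝ) (ψ : ℝ → ℝ → ℂ) : ℝ :=
  Real.sqrt (∑' p : ℕ × ℤ, ((p.1 : ℝ) + 1) ^ (2 * s) * ‖flCoeff ψ p.1 p.2‖ ^ 2)

/-- Axially symmetric functions on the sphere: functions not depending on the longitude. -/
def Axial (ψ : ℝ → ℝ → ℂ) : Prop := ∀ θ φ₁ φ₂, ψ θ φ₁ = ψ θ φ₂

/-- Spherical (latitude/longitude) coordinates on the unit sphere of `ℝ³`. -/
def sphCoord (θ φ : ℝ) : EuclideanSpace ℝ (Fin 3) :=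
  (WithLp.equiv 2 (Fin 3 → ℝ)).symm
    ![Real.cos θ * Real.cos φ, Real.cos θ * Real.sin φ, Real.sin θ]

/-- The open exterior `Ω` of the unit sphere. -/
def extDomain : Set (EuclideanSpace ℝ (Fin 3)) := {x | 1 < ‖x‖}

/-- The closed exterior `cl Ω` of the unit sphere. -/
def closedExt : Set (EuclideanSpace ℝ (Fin 3)) := {x | 1 ≤ ‖x‖}

/-- The Laplacian of a function on `ℝ³`. -/
def lap {F : Type*} [NormedAddCommGroup F] [NormedSpace ℝ F]
    (u : EuclideanSpace ℝ (Fin 3) → F) (x : EuclideanSpace ℝ (Fin 3)) : F :=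
  ∑ i : Fin 3, fderiv ℝ (fun y => fderiv ℝ u y (EuclideanSpace.single i 1)) x
    (EuclideanSpace.single i 1)

/-- The radial derivative `u_r` at a point of the unit sphere (taken from outside). -/
def radialDeriv {F : Type*} [NormedAddCommGroup F] [NormedSpace ℝ F]
    (u : EuclideanSpace ℝ (Fin 3) → F) (θ φ : ℝ) : F :=
  derivWithin (fun r : ℝ => u (r • sphCoord θ φ)) (Set.Ici 1) 1

/-- The latitudinal derivative `u_θ` at a point of the unit sphere. -/
def thetaDeriv {F : Type*} [NormedAddCommGroup F] [NormedSpace ℝ F]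
    (u : EuclideanSpace ℝ (Fin 3) → F) (θ φ : ℝ) : F :=
  deriv (fun t => u (sphCoord t φ)) θ

/-- The boundary trace on the unit sphere of a real-valued function, in coordinates. -/
def traceR (u : EuclideanSpace ℝ (Fin 3) → ℝ) (θ φ : ℝ) : ℂ := (u (sphCoord θ φ) : ℂ)

/-- The boundary trace on the unit sphere of a complex-valued function, in coordinates. -/
def traceC (u : EuclideanSpace ℝ (Fin 3) → ℂ) (θ φ : ℝ) : ℂ := u (sphCoord θ φ)

/-- The Fourier coefficient on the equator `ℰ`. -/
def equatorCoeff (h : ℝ → ℂ) (m : ℤ) : ℂ :=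
  (1 / (2 * Real.pi)) * ∫ φ in (-Real.pi)..Real.pi, h φ * Complex.exp (-(Complex.I * m * φ))

/-- Membership in the fractional Sobolev space `H^s(ℰ)` on the equator. -/
def MemHsE (s : ℝ) (h : ℝ → ℂ) : Prop :=
  MeasureTheory.MemLp h 2 (volume.restrict (Set.Ico (-Real.pi) Real.pi)) ∧
    Summable fun m : ℤ => ((m.natAbs : ℝ) + 1) ^ (2 * s) * ‖equatorCoeff h m‖ ^ 2

/-- The `H^s(ℰ)` norm. -/
def HsNormE (s : ℝ) (h : ℝ → ℂ) : ℝ :=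
  Real.sqrt (∑' m : ℤ, ((m.natAbs : ℝ) + 1) ^ (2 * s) * ‖equatorCoeff h m‖ ^ 2)

/-- The constant `β_l^m`. -/
def betaLM (l : ℕ) (m : ℤ) : ℝ :=
  Real.sqrt (((l : ℝ) - m.natAbs) * ((l : ℝ) + m.natAbs) /
    ((2 * (l : ℝ) - 1) * (2 * (l : ℝ) + 1)))

/-- The constant `γ_l^m = -(l+1)β_l^m / (3(l+2)β_{l+1}^m)`. -/
def gammaLM (l : ℕ) (m : ℤ) : ℝ :=
  -(((l : ℝ) + 1) * betaLM l m) / (3 * ((l : ℝ) + 2) * betaLM (l + 1) m)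

/-- The product `Γ_k^m = ∏_{j=1}^k γ_{|m|+2j-1}^m` (with `Γ_0^m = 1`). -/
def GammaKM (m : ℤ) (k : ℕ) : ℝ :=
  ∏ j ∈ Finset.Icc 1 k, gammaLM (m.natAbs + 2 * j - 1) m

/-- The value `α_{|m|+2k}^m P_{|m|+2k}^{|m|}(0)`. -/
def PzeroM (m : ℤ) (k : ℕ) : ℝ :=
  alphaY (m.natAbs + 2 * k) m * assocLegendre (m.natAbs + 2 * k) m.natAbs 0

/-- The coefficient `a_l^m = f̂_l^m / (6(l+2)β_{l+1}^m)`. -/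
def aCoef (f : ℝ → ℝ → ℂ) (l : ℕ) (m : ℤ) : ℂ :=
  flCoeff f l m / ((6 * ((l : ℝ) + 2) * betaLM (l + 1) m : ℝ) : ℂ)

/-- The solution of the recurrence `b_{|m|-1}^m = b_{|m|}^m = 0`,
`b_{l+1}^m = γ_l^m b_{l-1}^m + a_l^m`; here `bSeq f m n = b_{|m|-1+n}^m`. -/
def bSeq (f : ℝ → ℝ → ℂ) (m : ℤ) : ℕ → ℂ
  | 0 => 0
  | 1 => 0
  | n + 2 => ((gammaLM (m.natAbs + n) m : ℝ) : ℂ) * bSeq f m n + aCoef f (m.natAbs + n) m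

/-- The coefficient `b_l^m`. -/
def bCoef (f : ℝ → ℝ → ℂ) (l : ℕ) (m : ℤ) : ℂ := bSeq f m (l + 1 - m.natAbs)

/-- The constant `ã^m`. -/
def aTilde (f : ℝ → ℝ → ℂ) (h : ℝ → ℂ) (m : ℤ) : ℂ :=
  (equatorCoeff h m - ∑' k : ℕ, bCoef f (m.natAbs + 2 * k) m * ((PzeroM m k : ℝ) : ℂ)) /
    (((∑' k : ℕ, GammaKM m k * PzeroM m k : ℝ)) : ℂ)

/-- The coefficient `c_l^m`: `c_{|m|+2k}^m = Γ_k^m ã^m` and `c_{|m|+2k-1}^m = 0`. -/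
def cCoef (f : ℝ → ℝ → ℂ) (h : ℝ → ℂ) (l : ℕ) (m : ℤ) : ℂ :=
  if m.natAbs ≤ l ∧ (l - m.natAbs) % 2 = 0 then
    ((GammaKM m ((l - m.natAbs) / 2) : ℝ) : ℂ) * aTilde f h m
  else 0

/-- The boundary trace `v(1, θ, φ)` of the formal series solution. -/
def vTraceS (f : ℝ → ℝ → ℂ) (h : ℝ → ℂ) (θ φ : ℝ) : ℂ :=
  ∑' p : ℕ × ℤ, (bCoef f p.1 p.2 + cCoef f h p.1 p.2) * Ylm p.1 p.2 θ φ

/-- The latitude of a point of `ℝ³`. -/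
def latitude (x : EuclideanSpace ℝ (Fin 3)) : ℝ := Real.arcsin (x 2 / ‖x‖)

/-- The longitude of a point of `ℝ³`. -/
def longitude (x : EuclideanSpace ℝ (Fin 3)) : ℝ :=
  Complex.arg ((x 0 : ℂ) + (x 1 : ℂ) * Complex.I)

/-- The formal series solution `v = Σ (b_l^m + c_l^m) r^{-l-1} Y_l^m(θ, φ)`. -/
def vFun (f : ℝ → ℝ → ℂ) (h : ℝ → ℂ) (x : EuclideanSpace ℝ (Fin 3)) : ℂ :=
  ∑' p : ℕ × ℤ, (bCoef f p.1 p.2 + cCoef f h p.1 p.2) * ((‖x‖ : ℂ) ^ (-(p.1 : ℤ) - 1)) *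
    Ylm p.1 p.2 (latitude x) (longitude x)

/-- `v` is a classical solution of the linearized (oblique derivative) problem
`Δv = 0` in `Ω`, `∇d⋅∇v = -2 sin θ v_r + cos θ v_θ = f/2` on `𝕊`, `v → 0` at infinity,
`v = h` on the equator; complex-valued version. -/
def SolvesObliqueC (v : EuclideanSpace ℝ (Fin 3) → ℂ) (f : ℝ → ℝ → ℂ) (h : ℝ → ℂ) : Prop :=
  ContDiffOn ℝ 2 v extDomain ∧ ContDiffOn ℝ 1 v closedExt ∧
    (∀ x ∈ extDomain, lap v x = 0) ∧
    (∀ θ ∈ Set.Icc (-(Real.pi / 2)) (Real.pi / 2), ∀ φ : ℝ,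
      -2 * (Real.sin θ : ℂ) * radialDeriv v θ φ + (Real.cos θ : ℂ) * thetaDeriv v θ φ
        = f θ φ / 2) ∧
    Filter.Tendsto v (Bornology.cobounded _) (nhds 0) ∧
    (∀ φ : ℝ, v (sphCoord 0 φ) = h φ)

/-- Real-valued version of `SolvesObliqueC`. -/
def SolvesObliqueR (v : EuclideanSpace ℝ (Fin 3) → ℝ) (f : ℝ → ℝ → ℝ) (h : ℝ → ℝ) : Prop :=
  ContDiffOn ℝ 2 v extDomain ∧ ContDiffOn ℝ 1 v closedExt ∧
    (∀ x ∈ extDomain, lap v x = 0) ∧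
    (∀ θ ∈ Set.Icc (-(Real.pi / 2)) (Real.pi / 2), ∀ φ : ℝ,
      -2 * Real.sin θ * radialDeriv v θ φ + Real.cos θ * thetaDeriv v θ φ = f θ φ / 2) ∧
    Filter.Tendsto v (Bornology.cobounded _) (nhds 0) ∧
    (∀ φ : ℝ, v (sphCoord 0 φ) = h φ)


/-- `|∇w|² = w_r² + w_θ²` on the unit sphere, for axially symmetric functions. -/
def gradSqS (u : EuclideanSpace ℝ (Fin 3) → ℝ) (θ φ : ℝ) : ℂ :=
  ((radialDeriv u θ φ ^ 2 + thetaDeriv u θ φ ^ 2 : ℝ) : ℂ)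

/-!
By the maximum principle, a decaying harmonic function on the exterior of the sphere with axially
symmetric trace `∑ a_l Y_l^0` equals `∑ a_l r^{-l-1} Y_l^0`. Its derivatives on the sphere are
therefore `u_r = -∑ a_l (l + 1) Y_l^0` and `u_θ = ∑ a_l ∂_θ Y_l^0`.

Both families `(l + 1) Y_l^0` and `∂_θ Y_l^0` are orthogonal, are bounded by `(l + 1)^{3/2}`, and
have products of degrees `l` and `k` that contain only harmonics of degree at most `l + k`. Let `f`
and `g` be two series in one of these families, and let `f₀`, `g₀` be their parts of degree less
than `N / 2`. Then `f₀ g₀` is orthogonal to all harmonics of degree at least `N`, so by Bessel's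
inequality the energy of `f g` above `N` is at most a constant times
`sup |g|² ‖f - f₀‖² + sup |f₀|² ‖g - g₀‖²`. Summing by parts over `N` turns this tail bound into
the `H^s` estimate, since the suprema are controlled by the `H^{s+1}` norms when `s > 1`.
The estimate for differences follows from `|∇u|² - |∇v|² = ∇(u + v) · ∇(u - v)`.
-/

/-! ## Legendre polynomials -/

section Legendre

open Polynomial

theorem legendreP_zero : legendreP 0 = 1 := by simp [legendreP]

theorem derivative_legendreP_succ (n : ℕ) :
    derivative (legendreP (n + 1)) =
      X * derivative (legendreP n) + ((n : ℝ[X]) + 1) * legendreP n := by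
  have base : derivative ((X ^ 2 - 1 : ℝ[X]) ^ (n + 1)) =
      C (2 * ((n : ℝ) + 1)) * ((X ^ 2 - 1) ^ n * X) := by
    simp only [derivative_pow_succ, derivative_sub, derivative_one, derivative_X, map_mul, map_add,
      map_natCast, map_one, map_ofNat]
    ring
  have const : (2 ^ (n + 1) * (n + 1).factorial : ℝ)⁻¹ * (2 * (n + 1)) =
      (2 ^ n * n.factorial : ℝ)⁻¹ := by
    rw [Nat.factorial_succ]; push_cast; field_simp; ring
  rw [legendreP, legendreP, derivative_C_mul, derivative_C_mul,
    ← Function.iterate_succ_apply' (⇑derivative),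
    ← Function.iterate_succ_apply' (⇑derivative),
    Function.iterate_succ_apply, base, iterate_derivative_C_mul, iterate_derivative_mul_X,
    ← mul_assoc, ← C_mul, const, Nat.succ_eq_add_one, Nat.add_sub_cancel, nsmul_eq_mul]
  push_cast
  ring

theorem iterate_derivative_succ_X_sq_sub_one_mul_derivative {R : Type*} [CommRing R] (p : R[X])
    (n : ℕ) :
    derivative^[n + 1] ((X ^ 2 - 1) * derivative p) =
      (X ^ 2 - 1) * derivative^[n + 2] p + 2 * ((n : R[X]) + 1) * X * derivative^[n + 1] p +
        (n : R[X]) * ((n : R[X]) + 1) * derivative^[n] p := by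
  induction n with
  | zero => simp [derivative_mul]; ring
  | succ n ih =>
    rw [Function.iterate_succ_apply', ih]
    simp only [derivative_add, derivative_sub, derivative_mul, derivative_X, derivative_natCast,
      derivative_one, derivative_X_pow, derivative_ofNat, ← Function.iterate_succ_apply'
      (f := (derivative : R[X] →ₗ[R] R[X])), Nat.succ_eq_add_one, Nat.cast_ofNat, map_ofNat]
    push_cast
    ring

theorem legendreP_differential_equation (n : ℕ) :
    (X ^ 2 - 1) * derivative (derivative (legendreP n)) + 2 * X * derivative (legendreP n) =
      (n : ℝ[X]) * ((n : ℝ[X]) + 1) * legendreP n := by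
  have base : (X ^ 2 - 1 : ℝ[X]) * derivative ((X ^ 2 - 1) ^ n) =
      C (2 * (n : ℝ)) * ((X ^ 2 - 1) ^ n * X) := by
    rcases n with _ | n
    · simp
    · simp only [derivative_pow_succ, derivative_sub, derivative_one, derivative_X, map_mul,
        map_natCast, map_ofNat, Nat.cast_add, Nat.cast_one, map_add, map_one]
      ring
  have key := iterate_derivative_succ_X_sq_sub_one_mul_derivative ((X ^ 2 - 1 : ℝ[X]) ^ n) n
  rw [base, iterate_derivative_C_mul, iterate_derivative_mul_X] at key
  simp only [C_mul, map_ofNat, map_natCast, Nat.add_sub_cancel, nsmul_eq_mul, Nat.cast_add,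
    Nat.cast_one] at key
  simp only [legendreP, derivative_C_mul, ← Function.iterate_succ_apply'
    (f := (derivative : ℝ[X] →ₗ[ℝ] ℝ[X])), Nat.succ_eq_add_one]
  linear_combination -C ((2 ^ n * n.factorial : ℝ)⁻¹) * key

theorem eval_legendreP_of_sq_eq_one (n : ℕ) {ε : ℝ} (hε : ε ^ 2 = 1) :
    (legendreP n).eval ε = ε ^ n := by
  induction n with
  | zero => simp [legendreP_zero]
  | succ n ih =>
    have step := congrArg (eval ε) (derivative_legendreP_succ n)
    have ode := congrArg (eval ε) (legendreP_differential_equation n)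
    have ode' := congrArg (eval ε) (legendreP_differential_equation (n + 1))
    simp only [eval_mul, eval_add, eval_sub, eval_pow, eval_X, eval_one, eval_natCast,
      eval_ofNat, ih, hε, sub_self, zero_mul, zero_add] at step ode ode'
    push_cast at ode'
    have hn : ((n : ℝ) + 1) * (n + 2) ≠ 0 := by positivity
    apply mul_left_cancel₀ hn
    linear_combination -ode' + 2 * ε * step + ε * ode

theorem eval_one_legendreP (n : ℕ) : (legendreP n).eval 1 = 1 := by
  simp [eval_legendreP_of_sq_eq_one n (one_pow 2)]

theorem one_sub_X_sq_mul_derivative_legendreP (n : ℕ) :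
    (1 - X ^ 2) * derivative (legendreP n) =
      ((n : ℝ[X]) + 1) * (X * legendreP n - legendreP (n + 1)) := by
  set p := (1 - X ^ 2) * derivative (legendreP n) -
    ((n : ℝ[X]) + 1) * (X * legendreP n - legendreP (n + 1)) with hp
  have deriv_zero : derivative p = 0 := by
    simp only [hp, derivative_sub, derivative_mul, derivative_one, derivative_X_pow,
      derivative_add, derivative_natCast, derivative_X, derivative_legendreP_succ,
      Nat.cast_ofNat, map_ofNat]
    linear_combination -legendreP_differential_equation n
  have eval_zero : p.eval 1 = 0 := by simp [hp, eval_one_legendreP]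
  rw [eq_C_of_derivative_eq_zero deriv_zero, eval_C] at eval_zero
  rw [← sub_eq_zero, ← hp, eq_C_of_derivative_eq_zero deriv_zero, eval_zero, C_0]

theorem X_mul_derivative_legendreP_succ (n : ℕ) :
    X * derivative (legendreP (n + 1)) =
      derivative (legendreP n) + ((n : ℝ[X]) + 1) * legendreP (n + 1) := by
  linear_combination X * derivative_legendreP_succ n - one_sub_X_sq_mul_derivative_legendreP n

theorem natDegree_legendreP_le (n : ℕ) : (legendreP n).natDegree ≤ n := by
  refine (natDegree_C_mul_le _ _).trans ((natDegree_iterate_derivative _ _).trans ?_)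
  have : ((X ^ 2 - 1 : ℝ[X]) ^ n).natDegree ≤ n * 2 :=
    natDegree_pow_le_of_le n (by compute_degree)
  omega

theorem degree_legendreP (n : ℕ) : (legendreP n).degree = n := by
  refine le_antisymm (degree_le_of_natDegree_le (natDegree_legendreP_le n))
    (le_degree_of_ne_zero ?_)
  have monic : ((X ^ 2 - 1 : ℝ[X]) ^ n).Monic := (monic_X_pow_sub_C (1 : ℝ) two_ne_zero).pow n
  have degree : ((X ^ 2 - 1 : ℝ[X]) ^ n).natDegree = n + n := by
    rw [natDegree_pow, ← C_1, natDegree_X_pow_sub_C, mul_two]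
  have leading : ((X ^ 2 - 1 : ℝ[X]) ^ n).coeff (n + n) = 1 := by
    rw [← degree, monic.coeff_natDegree]
  rw [legendreP, coeff_C_mul, coeff_iterate_derivative, leading, nsmul_eq_mul, mul_one]
  have : (n + n).descFactorial n ≠ 0 := by simp [Nat.descFactorial_eq_zero_iff_lt]
  positivity

/-- The Legendre polynomials as a polynomial sequence, which makes Mathlib's spanning results
available. -/
def legendreSequence : Polynomial.Sequence ℝ where
  elems' := legendreP
  degree_eq' := degree_legendreP

theorem isUnit_leadingCoeff_legendreSequence (n : ℕ) :
    IsUnit (legendreSequence n).leadingCoeff :=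
  (leadingCoeff_ne_zero.mpr (legendreSequence.ne_zero n)).isUnit

-- Sonin's function `n(n+1) P_n² + (1 - x²) P_n'²` has derivative `2 x P_n'²`, so its maximum over
-- `[-1, 1]` is its value at the endpoints.
theorem sonin_legendreP_le (n : ℕ) {x : ℝ} (hx : x ∈ Set.Icc (-1 : ℝ) 1) :
    (n : ℝ) * (n + 1) * (legendreP n).eval x ^ 2 +
      (1 - x ^ 2) * (derivative (legendreP n)).eval x ^ 2 ≤ (n : ℝ) * (n + 1) := by
  set F : ℝ[X] := (n : ℝ[X]) * ((n : ℝ[X]) + 1) * legendreP n ^ 2 +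
    (1 - X ^ 2) * derivative (legendreP n) ^ 2 with hF
  have derivative_F : derivative F = 2 * X * derivative (legendreP n) ^ 2 := by
    simp only [hF, derivative_sub, derivative_mul, derivative_one, derivative_X,
      derivative_add, derivative_natCast, derivative_pow, Nat.cast_ofNat, map_ofNat]
    linear_combination (-2) * derivative (legendreP n) * legendreP_differential_equation n
  have deriv_F (y : ℝ) :
      deriv (fun y => F.eval y) y = 2 * y * (derivative (legendreP n)).eval y ^ 2 := by
    rw [Polynomial.deriv, derivative_F]; simp
  have eval_F (y : ℝ) : F.eval y = (n : ℝ) * (n + 1) * (legendreP n).eval y ^ 2 +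
      (1 - y ^ 2) * (derivative (legendreP n)).eval y ^ 2 := by simp [hF]
  have endpoint {ε : ℝ} (hε : ε ^ 2 = 1) : F.eval ε = n * (n + 1) := by
    rw [eval_F, eval_legendreP_of_sq_eq_one n hε, ← pow_mul, mul_comm n 2, pow_mul, hε]; simp
  rw [← eval_F]
  rcases le_total 0 x with h0 | h0
  · have mono : MonotoneOn (fun y => F.eval y) (Set.Icc 0 1) := by
      apply monotoneOn_of_deriv_nonneg (convex_Icc _ _) F.continuous.continuousOn
        F.differentiable.differentiableOn
      intro y hy
      rw [interior_Icc] at hy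
      rw [deriv_F]
      have := hy.1
      positivity
    exact (mono ⟨h0, hx.2⟩ ⟨by norm_num, le_rfl⟩ hx.2).trans_eq (endpoint (by norm_num))
  · have anti : AntitoneOn (fun y => F.eval y) (Set.Icc (-1) 0) := by
      apply antitoneOn_of_deriv_nonpos (convex_Icc _ _) F.continuous.continuousOn
        F.differentiable.differentiableOn
      intro y hy
      rw [interior_Icc] at hy
      rw [deriv_F]
      exact mul_nonpos_of_nonpos_of_nonneg (by linarith [hy.2]) (sq_nonneg _)
    exact (anti ⟨le_rfl, by norm_num⟩ ⟨hx.1, h0⟩ hx.1).trans_eq (endpoint (by norm_num))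

theorem abs_eval_legendreP_le_one (n : ℕ) {x : ℝ} (hx : x ∈ Set.Icc (-1 : ℝ) 1) :
    |(legendreP n).eval x| ≤ 1 := by
  rcases Nat.eq_zero_or_pos n with rfl | hn
  · simp [legendreP_zero]
  have hx2 : 0 ≤ 1 - x ^ 2 := by nlinarith [hx.1, hx.2]
  have hn' : (0 : ℝ) < (n : ℝ) * (n + 1) := by positivity
  have bound : (n : ℝ) * (n + 1) * (legendreP n).eval x ^ 2 ≤ (n : ℝ) * (n + 1) * 1 := by
    linarith [sonin_legendreP_le n hx,
      mul_nonneg hx2 (sq_nonneg ((derivative (legendreP n)).eval x))]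
  exact (sq_le_one_iff_abs_le_one _).mp (le_of_mul_le_mul_left bound hn')

theorem abs_eval_sin_derivative_legendreP_mul_cos_le (n : ℕ) (t : ℝ) :
    |(derivative (legendreP n)).eval (sin t) * cos t| ≤ (n : ℝ) + 1 := by
  have sonin := sonin_legendreP_le n (x := sin t) ⟨neg_one_le_sin t, sin_le_one t⟩
  rw [← cos_sq'] at sonin
  apply abs_le_of_sq_le_sq _ (by positivity)
  have : 0 ≤ (n : ℝ) * (n + 1) * (legendreP n).eval (sin t) ^ 2 := by positivity
  have : (0 : ℝ) ≤ n := by positivity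
  nlinarith

/-- The integral over `[-1, 1]` as a linear functional on real polynomials. -/
def polyIntegral : ℝ[X] →ₗ[ℝ] ℝ where
  toFun p := ∫ x in (-1 : ℝ)..1, p.eval x
  map_add' p q := by
    simp only [eval_add]
    exact intervalIntegral.integral_add (p.continuous.intervalIntegrable _ _)
      (q.continuous.intervalIntegrable _ _)
  map_smul' c p := by simp

theorem polyIntegral_apply (p : ℝ[X]) : polyIntegral p = ∫ x in (-1 : ℝ)..1, p.eval x := rfl

theorem polyIntegral_C_mul (c : ℝ) (p : ℝ[X]) : polyIntegral (C c * p) = c * polyIntegral p := by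
  rw [← smul_eq_C_mul, map_smul, smul_eq_mul]

theorem polyIntegral_derivative (p : ℝ[X]) :
    polyIntegral (derivative p) = p.eval 1 - p.eval (-1) :=
  intervalIntegral.integral_eq_sub_of_hasDerivAt (fun x _ => p.hasDerivAt x)
    (p.derivative.continuous.intervalIntegrable _ _)

theorem polyIntegral_derivative_legendreP_mul (n : ℕ) (p : ℝ[X]) :
    polyIntegral ((1 - X ^ 2) * derivative (legendreP n) * derivative p) =
      n * (n + 1) * polyIntegral (legendreP n * p) := by
  have green : derivative ((1 - X ^ 2) * derivative (legendreP n) * p) =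
      (1 - X ^ 2) * derivative (legendreP n) * derivative p -
        C ((n : ℝ) * (n + 1)) * (legendreP n * p) := by
    simp only [derivative_sub, derivative_mul, derivative_one, derivative_X_pow,
      Nat.cast_ofNat, map_ofNat, map_mul, map_natCast, map_add, map_one]
    linear_combination -p * legendreP_differential_equation n
  have boundary := polyIntegral_derivative ((1 - X ^ 2) * derivative (legendreP n) * p)
  rw [green, map_sub, polyIntegral_C_mul] at boundary
  simp only [eval_mul, eval_sub, eval_one, eval_pow, eval_X] at boundary
  linarith

theorem polyIntegral_legendreP_mul_legendreP_of_ne {n m : ℕ} (h : n ≠ m) :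
    polyIntegral (legendreP n * legendreP m) = 0 := by
  have hn := polyIntegral_derivative_legendreP_mul n (legendreP m)
  have hm := polyIntegral_derivative_legendreP_mul m (legendreP n)
  rw [mul_right_comm, hm, mul_comm (legendreP m)] at hn
  have hnm : ((n : ℝ) - m) * (n + m + 1) ≠ 0 :=
    mul_ne_zero (sub_ne_zero.mpr (by exact_mod_cast h)) (by positivity)
  refine (mul_eq_zero.mp ?_).resolve_left hnm
  linear_combination -hn

theorem polyIntegral_mul_legendreP_of_degree_lt {p : ℝ[X]} {n : ℕ} (h : p.degree < n) :
    polyIntegral (p * legendreP n) = 0 := by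
  have span_le : Submodule.span ℝ (legendreSequence '' Set.Iio n) ≤
      LinearMap.ker (polyIntegral ∘ₗ LinearMap.mulRight ℝ (legendreP n)) := by
    rw [Submodule.span_le]
    rintro _ ⟨k, hk, rfl⟩
    exact polyIntegral_legendreP_mul_legendreP_of_ne (ne_of_lt hk)
  rw [legendreSequence.span_degreeLT fun k _ => isUnit_leadingCoeff_legendreSequence k] at span_le
  exact span_le (mem_degreeLT.mpr h)

theorem polyIntegral_mul_legendreP_of_natDegree_lt {p : ℝ[X]} {n : ℕ} (h : p.natDegree < n) :
    polyIntegral (p * legendreP n) = 0 :=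
  polyIntegral_mul_legendreP_of_degree_lt
    (degree_le_natDegree.trans_lt (by exact_mod_cast h))

-- Integrate `(x P_n²)' = P_n² + 2 x P_n P_n'`, where `x P_n' = n P_n + P_{n-1}'`.
theorem polyIntegral_legendreP_sq (n : ℕ) :
    (2 * (n : ℝ) + 1) * polyIntegral (legendreP n * legendreP n) = 2 := by
  rcases n with _ | n
  · rw [legendreP_zero, polyIntegral_apply]; norm_num
  have orth : polyIntegral (derivative (legendreP n) * legendreP (n + 1)) = 0 := by
    apply polyIntegral_mul_legendreP_of_natDegree_lt
    have := natDegree_derivative_le (legendreP n)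
    have := natDegree_legendreP_le n
    omega
  have product : derivative (X * legendreP (n + 1) ^ 2) =
      C (2 * ((n : ℝ) + 1) + 1) * (legendreP (n + 1) * legendreP (n + 1)) +
        C 2 * (derivative (legendreP n) * legendreP (n + 1)) := by
    simp only [derivative_mul, derivative_X, derivative_pow, map_add, map_mul, map_natCast,
      map_one, map_ofNat, Nat.cast_ofNat]
    linear_combination 2 * legendreP (n + 1) * X_mul_derivative_legendreP_succ n
  have boundary := polyIntegral_derivative (X * legendreP (n + 1) ^ 2)
  have right : (legendreP (n + 1)).eval 1 ^ 2 = 1 := by rw [eval_one_legendreP, one_pow]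
  have left : (legendreP (n + 1)).eval (-1) ^ 2 = 1 := by
    rw [eval_legendreP_of_sq_eq_one (n + 1) (by norm_num), ← pow_mul, mul_comm, pow_mul]; simp
  rw [product, map_add, polyIntegral_C_mul, polyIntegral_C_mul, orth] at boundary
  simp only [eval_mul, eval_X, eval_pow, right, left] at boundary
  push_cast
  linarith

end Legendre

/-! ## Weighted square-summable sequences -/

section SobolevSequence

theorem sum_range_succ_mul_eq_sum_sub_mul_sum_Ico {R : Type*} [CommRing R] {f : ℕ → R}
    (hf : f 0 = 0) (c : ℕ → R) (M : ℕ) :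
    ∑ L ∈ Finset.range M, f (L + 1) * c L =
      ∑ N ∈ Finset.range M, (f (N + 1) - f N) * ∑ L ∈ Finset.Ico N M, c L := by
  calc ∑ L ∈ Finset.range M, f (L + 1) * c L
      = ∑ L ∈ Finset.range M, ∑ N ∈ Finset.range (L + 1), (f (N + 1) - f N) * c L := by
        refine Finset.sum_congr rfl fun L _ => ?_
        rw [← Finset.sum_mul, Finset.sum_range_sub, hf, sub_zero]
    _ = _ := by
        simp only [Finset.mul_sum]
        exact Finset.sum_comm' fun L N => by simp only [Finset.mem_range, Finset.mem_Ico]; omega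

theorem sum_range_sub_mul_ite_le {f : ℕ → ℝ} (hf : Monotone f) (hf0 : f 0 = 0) {x : ℝ}
    (hx : 0 ≤ x) (K M : ℕ) :
    ∑ N ∈ Finset.range M, (f (N + 1) - f N) * (if N ≤ K then x else 0) ≤ f (K + 1) * x := by
  calc ∑ N ∈ Finset.range M, (f (N + 1) - f N) * (if N ≤ K then x else 0)
      = ∑ N ∈ Finset.range M with N ≤ K, (f (N + 1) - f N) * x := by
        rw [Finset.sum_filter]
        exact Finset.sum_congr rfl fun N _ => by split_ifs <;> simp
    _ ≤ ∑ N ∈ Finset.range (K + 1), (f (N + 1) - f N) * x := by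
        refine Finset.sum_le_sum_of_subset_of_nonneg (fun N hN => ?_) fun N _ _ =>
          mul_nonneg (sub_nonneg.mpr (hf N.le_succ)) hx
        rw [Finset.mem_filter] at hN
        exact Finset.mem_range_succ_iff.mpr hN.2
    _ = f (K + 1) * x := by rw [← Finset.sum_mul, Finset.sum_range_sub, hf0, sub_zero]

theorem summable_mul_and_tsum_mul_le_of_tail_le {f a c : ℕ → ℝ} (hf : Monotone f) (hf0 : f 0 = 0)
    (ha : ∀ l, 0 ≤ a l) (hc : ∀ L, 0 ≤ c L) (hfa : Summable fun l => f (2 * l + 1) * a l)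
    (tail : ∀ N M, ∑ L ∈ Finset.Ico N M, c L ≤ ∑' l, if N ≤ 2 * l then a l else 0) :
    Summable (fun L => f (L + 1) * c L) ∧
      ∑' L, f (L + 1) * c L ≤ ∑' l, f (2 * l + 1) * a l := by
  have f_nonneg (n : ℕ) : 0 ≤ f n := hf0.symm.trans_le (hf n.zero_le)
  have increment_nonneg (N : ℕ) : 0 ≤ f (N + 1) - f N := sub_nonneg.mpr (hf N.le_succ)
  have summable_increment (N : ℕ) :
      Summable fun l => (f (N + 1) - f N) * (if N ≤ 2 * l then a l else 0) := by
    refine hfa.of_nonneg_of_le (fun l => ?_) fun l => ?_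
    · split_ifs
      · exact mul_nonneg (increment_nonneg N) (ha l)
      · simp
    · split_ifs with h
      · exact mul_le_mul_of_nonneg_right (by linarith [f_nonneg N, hf (Nat.succ_le_succ h)]) (ha l)
      · simpa using mul_nonneg (f_nonneg _) (ha l)
  have partial_sum_le (M : ℕ) :
      ∑ L ∈ Finset.range M, f (L + 1) * c L ≤ ∑' l, f (2 * l + 1) * a l := by
    calc ∑ L ∈ Finset.range M, f (L + 1) * c L
        = ∑ N ∈ Finset.range M, (f (N + 1) - f N) * ∑ L ∈ Finset.Ico N M, c L :=
          sum_range_succ_mul_eq_sum_sub_mul_sum_Ico hf0 c M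
      _ ≤ ∑ N ∈ Finset.range M, (f (N + 1) - f N) * ∑' l, (if N ≤ 2 * l then a l else 0) :=
          Finset.sum_le_sum fun N _ => mul_le_mul_of_nonneg_left (tail N M) (increment_nonneg N)
      _ = ∑' l, ∑ N ∈ Finset.range M, (f (N + 1) - f N) * (if N ≤ 2 * l then a l else 0) := by
          rw [Summable.tsum_finsetSum fun N _ => summable_increment N]
          simp only [tsum_mul_left]
      _ ≤ ∑' l, f (2 * l + 1) * a l :=
          (summable_sum fun N _ => summable_increment N).tsum_le_tsum
            (fun l => sum_range_sub_mul_ite_le hf hf0 (ha l) (2 * l) M) hfa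
  have term_nonneg (L : ℕ) : 0 ≤ f (L + 1) * c L := mul_nonneg (f_nonneg _) (hc L)
  exact ⟨summable_of_sum_range_le term_nonneg partial_sum_le,
    Real.tsum_le_of_sum_range_le term_nonneg partial_sum_le⟩

/-- Sequences with finite `sobolevNorm`, the coefficient side of the Sobolev space of order `σ`. -/
def SobolevSummable (σ : ℝ) (a : ℕ → ℝ) : Prop :=
  Summable fun l : ℕ => ((l : ℝ) + 1) ^ (2 * σ) * a l ^ 2

/-- The Sobolev norm of order `σ` of a sequence of coefficients. It is only meaningful under
`SobolevSummable σ a`. -/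
def sobolevNorm (σ : ℝ) (a : ℕ → ℝ) : ℝ :=
  √(∑' l : ℕ, ((l : ℝ) + 1) ^ (2 * σ) * a l ^ 2)

theorem sobolevNorm_nonneg (σ : ℝ) (a : ℕ → ℝ) : 0 ≤ sobolevNorm σ a := Real.sqrt_nonneg _

theorem sobolevNorm_sq (σ : ℝ) (a : ℕ → ℝ) :
    sobolevNorm σ a ^ 2 = ∑' l : ℕ, ((l : ℝ) + 1) ^ (2 * σ) * a l ^ 2 :=
  Real.sq_sqrt (tsum_nonneg fun l => by positivity)

theorem rpow_two_mul_mul_sq (l : ℕ) (σ x : ℝ) :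
    ((l : ℝ) + 1) ^ (2 * σ) * x ^ 2 = (((l : ℝ) + 1) ^ σ * |x|) ^ (2 : ℝ) := by
  rw [Real.rpow_two, mul_pow, sq_abs, mul_comm 2 σ, Real.rpow_mul (by positivity), Real.rpow_two]

theorem sobolevNorm_eq_rpow (σ : ℝ) (a : ℕ → ℝ) :
    sobolevNorm σ a = (∑' l : ℕ, (((l : ℝ) + 1) ^ σ * |a l|) ^ (2 : ℝ)) ^ (1 / (2 : ℝ)) := by
  simp only [sobolevNorm, rpow_two_mul_mul_sq, Real.sqrt_eq_rpow]

theorem SobolevSummable.add {σ : ℝ} {a b : ℕ → ℝ} (ha : SobolevSummable σ a)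
    (hb : SobolevSummable σ b) :
    SobolevSummable σ (a + b) ∧ sobolevNorm σ (a + b) ≤ sobolevNorm σ a + sobolevNorm σ b := by
  unfold SobolevSummable at *
  simp only [rpow_two_mul_mul_sq] at *
  have minkowski := Real.Lp_add_le_tsum_of_nonneg one_le_two (fun l : ℕ => by positivity)
    (fun l : ℕ => by positivity) ha hb
  have term_le (l : ℕ) : (((l : ℝ) + 1) ^ σ * |(a + b) l|) ^ (2 : ℝ) ≤
      (((l : ℝ) + 1) ^ σ * |a l| + ((l : ℝ) + 1) ^ σ * |b l|) ^ (2 : ℝ) := by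
    rw [← mul_add]
    gcongr
    exact abs_add_le _ _
  have summable_add := minkowski.1.of_nonneg_of_le (fun l => by positivity) term_le
  refine ⟨summable_add, ?_⟩
  simp only [sobolevNorm_eq_rpow]
  refine le_trans (Real.rpow_le_rpow (tsum_nonneg fun l => by positivity)
    (summable_add.tsum_le_tsum term_le minkowski.1) (by positivity)) minkowski.2

theorem SobolevSummable.sub {σ : ℝ} {a b : ℕ → ℝ} (ha : SobolevSummable σ a)
    (hb : SobolevSummable σ b) : SobolevSummable σ (a - b) := by
  rw [sub_eq_add_neg]
  exact (ha.add (b := -b) (by simpa [SobolevSummable] using hb)).1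

/-- The sum `∑ (l + 1)^{3/2} |a_l|`: it dominates the series `∑ a_l e_l` for every family with
`|e_l| ≤ (l + 1)^{3/2}`. -/
def majorant (a : ℕ → ℝ) : ℝ := ∑' l : ℕ, ((l : ℝ) + 1) ^ (3 / 2 : ℝ) * |a l|

/-- Sequences with finite `majorant`. -/
def Majorized (a : ℕ → ℝ) : Prop := Summable fun l : ℕ => ((l : ℝ) + 1) ^ (3 / 2 : ℝ) * |a l|

theorem majorant_nonneg (a : ℕ → ℝ) : 0 ≤ majorant a := tsum_nonneg fun l => by positivity

/-- The constant in the embedding `majorant a ≤ embeddingConstant s * sobolevNorm (s + 1) a`. -/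
def embeddingConstant (s : ℝ) : ℝ := √(∑' l : ℕ, ((l : ℝ) + 1) ^ (1 - 2 * s))

theorem summable_rpow_one_sub_two_mul {s : ℝ} (hs : 1 < s) :
    Summable fun l : ℕ => ((l : ℝ) + 1) ^ (1 - 2 * s) := by
  simpa using (summable_nat_add_iff 1).mpr
    (Real.summable_nat_rpow.mpr (show 1 - 2 * s < -1 by linarith))

theorem embeddingConstant_pos {s : ℝ} (hs : 1 < s) : 0 < embeddingConstant s :=
  Real.sqrt_pos.mpr
    ((summable_rpow_one_sub_two_mul hs).tsum_pos (fun l => by positivity) 0 (by simp))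

-- Cauchy–Schwarz for `(l+1)^{3/2} |a_l| = (l+1)^{s+1} |a_l| · (l+1)^{1/2-s}`; the second factor is
-- square summable because `s > 1`.
theorem SobolevSummable.majorant_le {s : ℝ} (hs : 1 < s) {a : ℕ → ℝ}
    (ha : SobolevSummable (s + 1) a) :
    Majorized a ∧ majorant a ≤ embeddingConstant s * sobolevNorm (s + 1) a := by
  have factor (l : ℕ) : ((l : ℝ) + 1) ^ (s + 1) * |a l| * ((l : ℝ) + 1) ^ (1 / 2 - s) =
      ((l : ℝ) + 1) ^ (3 / 2 : ℝ) * |a l| := by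
    rw [mul_right_comm, ← Real.rpow_add (by positivity)]
    congr 2; ring
  have square (l : ℕ) :
      (((l : ℝ) + 1) ^ (1 / 2 - s)) ^ (2 : ℝ) = ((l : ℝ) + 1) ^ (1 - 2 * s) := by
    rw [← Real.rpow_mul (by positivity)]; congr 1; ring
  have cauchy_schwarz := Real.summable_and_inner_le_Lp_mul_Lq_tsum_of_nonneg
    Real.HolderConjugate.two_two (f := fun l : ℕ => ((l : ℝ) + 1) ^ (s + 1) * |a l|)
    (g := fun l : ℕ => ((l : ℝ) + 1) ^ (1 / 2 - s)) (fun l => by positivity)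
    (fun l => by positivity) (by simpa only [SobolevSummable, rpow_two_mul_mul_sq] using ha)
    (by simpa only [square] using summable_rpow_one_sub_two_mul hs)
  simp only [factor, square] at cauchy_schwarz
  rw [← sobolevNorm_eq_rpow, ← Real.sqrt_eq_rpow, mul_comm] at cauchy_schwarz
  exact cauchy_schwarz

theorem SobolevSummable.summable_sq_mul_sq {σ : ℝ} (hσ : 1 ≤ σ) {a : ℕ → ℝ}
    (ha : SobolevSummable σ a) : Summable fun l : ℕ => ((l : ℝ) + 1) ^ 2 * a l ^ 2 := by
  refine ha.of_nonneg_of_le (fun l => by positivity) fun l => ?_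
  gcongr
  rw [← Real.rpow_two]
  exact Real.rpow_le_rpow_of_exponent_le (by linarith [l.cast_nonneg (α := ℝ)]) (by linarith)

theorem summable_ite_of_summable {f : ℕ → ℝ} (hf : Summable f) (p : ℕ → Prop) [DecidablePred p] :
    Summable fun l => if p l then f l else 0 :=
  (hf.indicator {l | p l}).congr fun l => by simp [Set.indicator]

theorem two_mul_add_one_rpow_mul_sq_le {s : ℝ} (hs : 0 ≤ s) (l : ℕ) :
    ((2 * l + 1 : ℕ) : ℝ) ^ (2 * s) * ((l : ℝ) + 1) ^ 2 ≤
      2 ^ (2 * s) * ((l : ℝ) + 1) ^ (2 * (s + 1)) := by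
  calc ((2 * l + 1 : ℕ) : ℝ) ^ (2 * s) * ((l : ℝ) + 1) ^ 2
      ≤ (2 * ((l : ℝ) + 1)) ^ (2 * s) * ((l : ℝ) + 1) ^ 2 := by
        gcongr
        push_cast
        linarith
    _ = _ := by
        rw [Real.mul_rpow two_pos.le (by positivity), mul_assoc, ← Real.rpow_two,
          ← Real.rpow_add (by positivity), mul_add, mul_one]

theorem SobolevSummable.of_tail_le {s : ℝ} (hs : 0 < s) {a b c : ℕ → ℝ} {p q : ℝ} (hp : 0 ≤ p)
    (hq : 0 ≤ q) (ha : SobolevSummable (s + 1) a) (hb : SobolevSummable (s + 1) b)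
    (tail : ∀ N M, ∑ L ∈ Finset.Ico N M, c L ^ 2 ≤
      p * (∑' l : ℕ, if N ≤ 2 * l then ((l : ℝ) + 1) ^ 2 * a l ^ 2 else 0) +
        q * ∑' l : ℕ, if N ≤ 2 * l then ((l : ℝ) + 1) ^ 2 * b l ^ 2 else 0) :
    SobolevSummable s c ∧ sobolevNorm s c ^ 2 ≤
      2 ^ (2 * s) * (p * sobolevNorm (s + 1) a ^ 2 + q * sobolevNorm (s + 1) b ^ 2) := by
  set E : ℕ → ℝ := fun l =>
    p * (((l : ℝ) + 1) ^ 2 * a l ^ 2) + q * (((l : ℝ) + 1) ^ 2 * b l ^ 2) with hE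
  have tail' (N M : ℕ) :
      ∑ L ∈ Finset.Ico N M, c L ^ 2 ≤ ∑' l, if N ≤ 2 * l then E l else 0 := by
    have ha' := summable_ite_of_summable (ha.summable_sq_mul_sq (by linarith)) fun l => N ≤ 2 * l
    have hb' := summable_ite_of_summable (hb.summable_sq_mul_sq (by linarith)) fun l => N ≤ 2 * l
    refine (tail N M).trans_eq ?_
    rw [← tsum_mul_left, ← tsum_mul_left, ← (ha'.mul_left p).tsum_add (hb'.mul_left q)]
    exact tsum_congr fun l => by split_ifs <;> simp [hE]
  have weight_le (l : ℕ) : ((2 * l + 1 : ℕ) : ℝ) ^ (2 * s) * E l ≤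
      2 ^ (2 * s) * (p * (((l : ℝ) + 1) ^ (2 * (s + 1)) * a l ^ 2) +
        q * (((l : ℝ) + 1) ^ (2 * (s + 1)) * b l ^ 2)) := by
    have hl := two_mul_add_one_rpow_mul_sq_le hs.le l
    calc ((2 * l + 1 : ℕ) : ℝ) ^ (2 * s) * E l
        = p * a l ^ 2 * (((2 * l + 1 : ℕ) : ℝ) ^ (2 * s) * ((l : ℝ) + 1) ^ 2) +
          q * b l ^ 2 * (((2 * l + 1 : ℕ) : ℝ) ^ (2 * s) * ((l : ℝ) + 1) ^ 2) := by ring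
      _ ≤ p * a l ^ 2 * (2 ^ (2 * s) * ((l : ℝ) + 1) ^ (2 * (s + 1))) +
          q * b l ^ 2 * (2 ^ (2 * s) * ((l : ℝ) + 1) ^ (2 * (s + 1))) := by gcongr
      _ = _ := by ring
  have hab := (Summable.mul_left p ha).add (Summable.mul_left q hb)
  have summable_E := (hab.mul_left (2 ^ (2 * s))).of_nonneg_of_le (fun l => by positivity) weight_le
  obtain ⟨summable_c, tsum_c_le⟩ := summable_mul_and_tsum_mul_le_of_tail_le
    (f := fun n => (n : ℝ) ^ (2 * s)) (fun m n h => by dsimp only; gcongr) (by simp [hs.ne'])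
    (fun l => by positivity) (fun L => sq_nonneg _) summable_E tail'
  simp only [Nat.cast_add_one] at summable_c tsum_c_le
  refine ⟨summable_c, ?_⟩
  rw [sobolevNorm_sq, sobolevNorm_sq, sobolevNorm_sq, ← tsum_mul_left, ← tsum_mul_left,
    ← (Summable.mul_left p ha).tsum_add (Summable.mul_left q hb), ← tsum_mul_left]
  exact tsum_c_le.trans (by
    simpa only [Nat.cast_add_one] using summable_E.tsum_le_tsum weight_le (hab.mul_left _))

end SobolevSequence

/-! ## Products of series of derivative-like families -/

section DerivativeFamily

variable {X : Type*} [TopologicalSpace X] [MeasurableSpace X] {μ : Measure X}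

/-- Continuous functions `y 0, y 1, …` that are orthonormal in `L²(μ)`. -/
structure IsContinuousOrthonormal (μ : Measure X) (y : ℕ → X → ℝ) : Prop where
  continuous : ∀ l, Continuous (y l)
  integral_mul : ∀ l k, ∫ x, y l x * y k x ∂μ = if l = k then 1 else 0

/-- A family `e` sharing with the first derivatives of spherical harmonics `y` of degree `l` the
size of its members, their orthogonality, and the absence of frequencies above `l + k` in the
product `e l * e k`. -/
structure IsDerivativeFamily (μ : Measure X) (y e : ℕ → X → ℝ) : Prop where
  continuous : ∀ l, Continuous (e l)
  abs_apply_le : ∀ l x, |e l x| ≤ ((l : ℝ) + 1) ^ (3 / 2 : ℝ)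
  orthogonal : Pairwise fun l k => ∫ x, e l x * e k x ∂μ = 0
  integral_sq_le : ∀ l, ∫ x, e l x ^ 2 ∂μ ≤ ((l : ℝ) + 1) ^ 2
  integral_mul_mul : ∀ l k L, l + k < L → ∫ x, e l x * e k x * y L x ∂μ = 0

theorem integral_sq_sum_of_orthogonal (hμ : ∀ F : X → ℝ, Continuous F → Integrable F μ)
    {e : ℕ → X → ℝ} (he : ∀ l, Continuous (e l))
    (orth : Pairwise fun l k => ∫ x, e l x * e k x ∂μ = 0) (a : ℕ → ℝ) (S : Finset ℕ) :
    ∫ x, (∑ l ∈ S, a l * e l x) ^ 2 ∂μ = ∑ l ∈ S, a l ^ 2 * ∫ x, e l x ^ 2 ∂μ := by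
  have expand (x : X) : (∑ l ∈ S, a l * e l x) ^ 2 =
      ∑ l ∈ S, ∑ k ∈ S, a l * a k * (e l x * e k x) := by
    rw [sq, Finset.sum_mul_sum]
    exact Finset.sum_congr rfl fun l _ => Finset.sum_congr rfl fun k _ => by ring
  simp only [expand]
  rw [integral_finsetSum S fun l _ => hμ _ (by fun_prop)]
  refine Finset.sum_congr rfl fun l hl => ?_
  rw [integral_finsetSum S fun k _ => hμ _ (by fun_prop), Finset.sum_eq_single_of_mem l hl]
  · simp only [integral_const_mul, ← sq]
  · intro k _ hk
    rw [integral_const_mul, orth hk.symm, mul_zero]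

theorem IsContinuousOrthonormal.sum_sq_integral_mul_le {y : ℕ → X → ℝ}
    (hy : IsContinuousOrthonormal μ y) (hμ : ∀ F : X → ℝ, Continuous F → Integrable F μ)
    {F : X → ℝ} (hF : Continuous F) (S : Finset ℕ) :
    ∑ L ∈ S, (∫ x, F x * y L x ∂μ) ^ 2 ≤ ∫ x, F x ^ 2 ∂μ := by
  set c : ℕ → ℝ := fun L => ∫ x, F x * y L x ∂μ with hc
  have y_continuous := hy.continuous
  have projection : ∫ x, (∑ L ∈ S, c L * y L x) ^ 2 ∂μ = ∑ L ∈ S, c L ^ 2 := by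
    rw [integral_sq_sum_of_orthogonal hμ hy.continuous
      fun l k hlk => (hy.integral_mul l k).trans (if_neg hlk)]
    simp only [sq (y _ _), hy.integral_mul, if_true, mul_one]
  have cross : ∫ x, F x * ∑ L ∈ S, c L * y L x ∂μ = ∑ L ∈ S, c L ^ 2 := by
    simp only [Finset.mul_sum, mul_left_comm (F _)]
    rw [integral_finsetSum S fun L _ => hμ _ (by fun_prop)]
    simp only [integral_const_mul, hc, sq]
  have remainder : ∫ x, (F x - ∑ L ∈ S, c L * y L x) ^ 2 ∂μ =
      ∫ x, F x ^ 2 ∂μ - ∑ L ∈ S, c L ^ 2 := by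
    simp only [sub_sq, mul_assoc (2 : ℝ)]
    rw [integral_add (hμ _ (by fun_prop)) (hμ _ (by fun_prop)),
      integral_sub (hμ _ (by fun_prop)) (hμ _ (by fun_prop)), integral_const_mul, cross, projection]
    ring
  have remainder_nonneg : 0 ≤ ∫ x, (F x - ∑ L ∈ S, c L * y L x) ^ 2 ∂μ :=
    integral_nonneg fun x => sq_nonneg _
  linarith

theorem IsContinuousOrthonormal.sum_sq_integral_mul_mul_le {y : ℕ → X → ℝ}
    (hy : IsContinuousOrthonormal μ y) (hμ : ∀ F : X → ℝ, Continuous F → Integrable F μ)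
    {f g f₀ g₀ : X → ℝ} (hf : Continuous f) (hg : Continuous g) (hf₀ : Continuous f₀)
    (hg₀ : Continuous g₀) {A B : ℝ} (hA : ∀ x, |f₀ x| ≤ A) (hB : ∀ x, |g x| ≤ B) {S : Finset ℕ}
    (low : ∀ L ∈ S, ∫ x, f₀ x * g₀ x * y L x ∂μ = 0) :
    ∑ L ∈ S, (∫ x, f x * g x * y L x ∂μ) ^ 2 ≤
      2 * B ^ 2 * ∫ x, (f x - f₀ x) ^ 2 ∂μ + 2 * A ^ 2 * ∫ x, (g x - g₀ x) ^ 2 ∂μ := by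
  have y_continuous := hy.continuous
  have drop_low (L : ℕ) (hL : L ∈ S) : ∫ x, f x * g x * y L x ∂μ =
      ∫ x, ((f x - f₀ x) * g x + f₀ x * (g x - g₀ x)) * y L x ∂μ := by
    rw [← sub_zero (∫ x, f x * g x * y L x ∂μ), ← low L hL,
      ← integral_sub (hμ _ (by fun_prop)) (hμ _ (by fun_prop))]
    congr with x
    ring
  have pointwise (x : X) : ((f x - f₀ x) * g x + f₀ x * (g x - g₀ x)) ^ 2 ≤
      2 * B ^ 2 * (f x - f₀ x) ^ 2 + 2 * A ^ 2 * (g x - g₀ x) ^ 2 := by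
    have hgx : g x ^ 2 ≤ B ^ 2 := sq_le_sq' (abs_le.mp (hB x)).1 (abs_le.mp (hB x)).2
    have hfx : f₀ x ^ 2 ≤ A ^ 2 := sq_le_sq' (abs_le.mp (hA x)).1 (abs_le.mp (hA x)).2
    calc _ ≤ 2 * (((f x - f₀ x) * g x) ^ 2 + (f₀ x * (g x - g₀ x)) ^ 2) := add_sq_le
      _ = 2 * g x ^ 2 * (f x - f₀ x) ^ 2 + 2 * f₀ x ^ 2 * (g x - g₀ x) ^ 2 := by ring
      _ ≤ _ := by gcongr
  calc ∑ L ∈ S, (∫ x, f x * g x * y L x ∂μ) ^ 2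
      = ∑ L ∈ S, (∫ x, ((f x - f₀ x) * g x + f₀ x * (g x - g₀ x)) * y L x ∂μ) ^ 2 :=
        Finset.sum_congr rfl fun L hL => by rw [drop_low L hL]
    _ ≤ ∫ x, ((f x - f₀ x) * g x + f₀ x * (g x - g₀ x)) ^ 2 ∂μ :=
        hy.sum_sq_integral_mul_le hμ (by fun_prop) _
    _ ≤ ∫ x, 2 * B ^ 2 * (f x - f₀ x) ^ 2 + 2 * A ^ 2 * (g x - g₀ x) ^ 2 ∂μ :=
        integral_mono (hμ _ (by fun_prop)) (hμ _ (by fun_prop)) pointwise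
    _ = _ := by
        rw [integral_add (hμ _ (by fun_prop)) (hμ _ (by fun_prop)), integral_const_mul,
          integral_const_mul]

namespace IsDerivativeFamily

variable {y e : ℕ → X → ℝ} {a b : ℕ → ℝ}

theorem abs_mul_le (he : IsDerivativeFamily μ y e) (a : ℕ → ℝ) (l : ℕ) (x : X) :
    |a l * e l x| ≤ ((l : ℝ) + 1) ^ (3 / 2 : ℝ) * |a l| := by
  rw [abs_mul, mul_comm]
  exact mul_le_mul_of_nonneg_right (he.abs_apply_le l x) (abs_nonneg _)

theorem hasSum (he : IsDerivativeFamily μ y e) (ha : Majorized a) (x : X) :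
    HasSum (fun l => a l * e l x) (∑' l, a l * e l x) :=
  (ha.of_norm_bounded fun l => he.abs_mul_le a l x).hasSum

theorem tsum_add_mul (he : IsDerivativeFamily μ y e) (ha : Majorized a) (hb : Majorized b) (x : X) :
    ∑' l, (a + b) l * e l x = ∑' l, a l * e l x + ∑' l, b l * e l x := by
  simpa only [Pi.add_apply, add_mul] using ((he.hasSum ha x).add (he.hasSum hb x)).tsum_eq

theorem tsum_sub_mul (he : IsDerivativeFamily μ y e) (ha : Majorized a) (hb : Majorized b) (x : X) :
    ∑' l, (a - b) l * e l x = ∑' l, a l * e l x - ∑' l, b l * e l x := by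
  simpa only [Pi.sub_apply, sub_mul] using ((he.hasSum ha x).sub (he.hasSum hb x)).tsum_eq

theorem continuous_tsum (he : IsDerivativeFamily μ y e) (ha : Majorized a) :
    Continuous fun x => ∑' l, a l * e l x :=
  _root_.continuous_tsum (fun l => continuous_const.mul (he.continuous l)) ha (he.abs_mul_le a)

theorem abs_sum_le (he : IsDerivativeFamily μ y e) (ha : Majorized a) (S : Finset ℕ) (x : X) :
    |∑ l ∈ S, a l * e l x| ≤ majorant a :=
  calc |∑ l ∈ S, a l * e l x| ≤ ∑ l ∈ S, |a l * e l x| := Finset.abs_sum_le_sum_abs _ _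
    _ ≤ ∑ l ∈ S, ((l : ℝ) + 1) ^ (3 / 2 : ℝ) * |a l| :=
      Finset.sum_le_sum fun l _ => he.abs_mul_le a l x
    _ ≤ majorant a := ha.sum_le_tsum S fun l _ => by positivity

theorem abs_tsum_le (he : IsDerivativeFamily μ y e) (ha : Majorized a) (x : X) :
    |∑' l, a l * e l x| ≤ majorant a :=
  le_of_tendsto (he.hasSum ha x).abs (Eventually.of_forall fun S => he.abs_sum_le ha S x)

theorem integral_tsum_sub_sum_sq_le (he : IsDerivativeFamily μ y e)
    (hμ : ∀ F : X → ℝ, Continuous F → Integrable F μ) (ha : Majorized a)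
    (ha' : Summable fun l : ℕ => ((l : ℝ) + 1) ^ 2 * a l ^ 2) (m : ℕ) :
    ∫ x, (∑' l, a l * e l x - ∑ l ∈ Finset.range m, a l * e l x) ^ 2 ∂μ ≤
      ∑' l : ℕ, if m ≤ l then ((l : ℝ) + 1) ^ 2 * a l ^ 2 else 0 := by
  have e_continuous := he.continuous
  have integrable (M : ℕ) : Integrable (fun x =>
      (∑ l ∈ Finset.range M, a l * e l x - ∑ l ∈ Finset.range m, a l * e l x) ^ 2) μ :=
    hμ _ (by fun_prop)
  have limit : Tendsto
      (fun M => ∫ x, (∑ l ∈ Finset.range M, a l * e l x - ∑ l ∈ Finset.range m, a l * e l x) ^ 2 ∂μ)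
      atTop (nhds (∫ x, (∑' l, a l * e l x - ∑ l ∈ Finset.range m, a l * e l x) ^ 2 ∂μ)) := by
    refine tendsto_integral_of_dominated_convergence (fun _ => (majorant a + majorant a) ^ 2)
      (fun M => (integrable M).aestronglyMeasurable) (hμ _ continuous_const)
      (fun M => Eventually.of_forall fun x => ?_) (Eventually.of_forall fun x =>
        ((he.hasSum ha x).tendsto_sum_nat.sub_const _).pow 2)
    rw [norm_pow, Real.norm_eq_abs]
    gcongr
    exact (abs_sub _ _).trans (add_le_add (he.abs_sum_le ha _ x) (he.abs_sum_le ha _ x))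
  refine le_of_tendsto limit ?_
  filter_upwards [eventually_ge_atTop m] with M hM
  simp only [← Finset.sum_Ico_eq_sub _ hM]
  rw [integral_sq_sum_of_orthogonal hμ he.continuous he.orthogonal]
  calc ∑ l ∈ Finset.Ico m M, a l ^ 2 * ∫ x, e l x ^ 2 ∂μ
      ≤ ∑ l ∈ Finset.Ico m M, if m ≤ l then ((l : ℝ) + 1) ^ 2 * a l ^ 2 else 0 := by
        refine Finset.sum_le_sum fun l hl => ?_
        rw [if_pos (Finset.mem_Ico.mp hl).1, mul_comm]
        exact mul_le_mul_of_nonneg_right (he.integral_sq_le l) (sq_nonneg _)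
    _ ≤ _ := (summable_ite_of_summable ha' (m ≤ ·)).sum_le_tsum _ fun l _ => by
      split_ifs <;> positivity

theorem integral_sum_mul_sum_mul (he : IsDerivativeFamily μ y e)
    (hy : IsContinuousOrthonormal μ y) (hμ : ∀ F : X → ℝ, Continuous F → Integrable F μ)
    (a b : ℕ → ℝ) {m L : ℕ} (hL : 2 * m ≤ L + 1) :
    ∫ x, (∑ l ∈ Finset.range m, a l * e l x) * (∑ l ∈ Finset.range m, b l * e l x) * y L x ∂μ =
      0 := by
  have e_continuous := he.continuous
  have y_continuous := hy.continuous
  have expand (x : X) : (∑ l ∈ Finset.range m, a l * e l x) *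
      (∑ l ∈ Finset.range m, b l * e l x) * y L x = ∑ l ∈ Finset.range m,
        ∑ k ∈ Finset.range m, a l * b k * (e l x * e k x * y L x) := by
    rw [Finset.sum_mul_sum, Finset.sum_mul]
    simp only [Finset.sum_mul]
    exact Finset.sum_congr rfl fun l _ => Finset.sum_congr rfl fun k _ => by ring
  simp only [expand]
  rw [integral_finsetSum _ fun l _ => hμ _ (by fun_prop)]
  refine Finset.sum_eq_zero fun l hl => ?_
  rw [integral_finsetSum _ fun k _ => hμ _ (by fun_prop)]
  refine Finset.sum_eq_zero fun k hk => ?_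
  rw [Finset.mem_range] at hl hk
  rw [integral_const_mul, he.integral_mul_mul l k L (by omega), mul_zero]

-- With `m = ⌈N / 2⌉`, the product of the two partial sums of length `m` has no frequency `≥ N`, so
-- Bessel's inequality only sees the rest of the product, which contains a tail as a factor.
theorem sum_sq_integral_tsum_mul_tsum_le (he : IsDerivativeFamily μ y e)
    (hy : IsContinuousOrthonormal μ y) (hμ : ∀ F : X → ℝ, Continuous F → Integrable F μ)
    (ha : Majorized a) (hb : Majorized b)
    (ha' : Summable fun l : ℕ => ((l : ℝ) + 1) ^ 2 * a l ^ 2)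
    (hb' : Summable fun l : ℕ => ((l : ℝ) + 1) ^ 2 * b l ^ 2) (N M : ℕ) :
    ∑ L ∈ Finset.Ico N M,
        (∫ x, (∑' l, a l * e l x) * (∑' l, b l * e l x) * y L x ∂μ) ^ 2 ≤
      2 * majorant b ^ 2 * (∑' l : ℕ, if N ≤ 2 * l then ((l : ℝ) + 1) ^ 2 * a l ^ 2 else 0) +
        2 * majorant a ^ 2 * ∑' l : ℕ, if N ≤ 2 * l then ((l : ℝ) + 1) ^ 2 * b l ^ 2 else 0 := by
  obtain ⟨m, hm, le_iff⟩ : ∃ m, 2 * m ≤ N + 1 ∧ ∀ l, m ≤ l ↔ N ≤ 2 * l :=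
    ⟨(N + 1) / 2, by omega, fun l => by omega⟩
  have e_continuous := he.continuous
  have tail_a := he.integral_tsum_sub_sum_sq_le hμ ha ha' m
  have tail_b := he.integral_tsum_sub_sum_sq_le hμ hb hb' m
  simp only [le_iff] at tail_a tail_b
  refine (hy.sum_sq_integral_mul_mul_le hμ (he.continuous_tsum ha) (he.continuous_tsum hb)
    (f₀ := fun x => ∑ l ∈ Finset.range m, a l * e l x)
    (g₀ := fun x => ∑ l ∈ Finset.range m, b l * e l x) (by fun_prop) (by fun_prop)
    (he.abs_sum_le ha _) (he.abs_tsum_le hb) fun L hL => ?_).trans (by gcongr)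
  rw [Finset.mem_Ico] at hL
  exact he.integral_sum_mul_sum_mul hy hμ a b (by omega)

theorem sobolevNorm_integral_tsum_mul_tsum_le (he : IsDerivativeFamily μ y e)
    (hy : IsContinuousOrthonormal μ y) (hμ : ∀ F : X → ℝ, Continuous F → Integrable F μ)
    {s : ℝ} (hs : 1 < s)
    (ha : SobolevSummable (s + 1) a) (hb : SobolevSummable (s + 1) b) :
    SobolevSummable s (fun L => ∫ x, (∑' l, a l * e l x) * (∑' l, b l * e l x) * y L x ∂μ) ∧
      sobolevNorm s (fun L => ∫ x, (∑' l, a l * e l x) * (∑' l, b l * e l x) * y L x ∂μ) ≤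
        2 ^ (s + 1) * embeddingConstant s * sobolevNorm (s + 1) a * sobolevNorm (s + 1) b := by
  obtain ⟨ha', majorant_a_le⟩ := ha.majorant_le hs
  obtain ⟨hb', majorant_b_le⟩ := hb.majorant_le hs
  have estimate := SobolevSummable.of_tail_le (by linarith) (by positivity) (by positivity) ha hb
    (he.sum_sq_integral_tsum_mul_tsum_le hy hμ ha' hb'
      (ha.summable_sq_mul_sq (by linarith)) (hb.summable_sq_mul_sq (by linarith)))
  have norm_a_nonneg := sobolevNorm_nonneg (s + 1) a
  have norm_b_nonneg := sobolevNorm_nonneg (s + 1) b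
  have constant_nonneg := (embeddingConstant_pos hs).le
  refine ⟨estimate.1, (sq_le_sq₀ (sobolevNorm_nonneg _ _) (by positivity)).mp ?_⟩
  have square : ((2 : ℝ) ^ (s + 1)) ^ 2 = 4 * 2 ^ (2 * s) := by
    rw [Real.rpow_add two_pos, mul_comm 2 s, Real.rpow_mul two_pos.le]
    norm_num [mul_pow]
    ring
  calc _ ≤ _ := estimate.2
    _ ≤ 2 ^ (2 * s) *
        (2 * (embeddingConstant s * sobolevNorm (s + 1) b) ^ 2 * sobolevNorm (s + 1) a ^ 2 +
          2 * (embeddingConstant s * sobolevNorm (s + 1) a) ^ 2 * sobolevNorm (s + 1) b ^ 2) := by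
        have := majorant_nonneg a
        have := majorant_nonneg b
        gcongr
    _ = _ := by simp only [mul_pow, square]; ring

end IsDerivativeFamily

end DerivativeFamily

/-! ## Zonal harmonics -/

section Zonal

open Polynomial

theorem sphereMeasure_eq_prod :
    sphereMeasure = (((volume : Measure ℝ).restrict (Set.Icc (-(π / 2)) (π / 2))).withDensity
      fun t => ENNReal.ofReal (cos t)).prod (volume.restrict (Set.Ico (-π) π)) := by
  rw [prod_withDensity_left (by fun_prop), Measure.prod_restrict]
  rfl

/-- The push-forward of the surface measure of the sphere to the latitude. -/
def latitudeMeasure : Measure ℝ := sphereMeasure.fst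

theorem latitudeMeasure_eq :
    latitudeMeasure = ENNReal.ofReal (2 * π) •
      ((volume : Measure ℝ).restrict (Set.Icc (-(π / 2)) (π / 2))).withDensity
        fun t => ENNReal.ofReal (cos t) := by
  rw [latitudeMeasure, sphereMeasure_eq_prod, Measure.fst, Measure.map_fst_prod,
    Measure.restrict_apply_univ, Real.volume_Ico]
  congr 2
  ring

theorem integrable_latitudeMeasure {F : ℝ → ℝ} (hF : Continuous F) :
    Integrable F latitudeMeasure := by
  rw [latitudeMeasure_eq]
  refine Integrable.smul_measure ?_ ENNReal.ofReal_ne_top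
  rw [integrable_withDensity_iff_integrable_smul₀' (by fun_prop)
    (Eventually.of_forall fun _ => ENNReal.ofReal_lt_top)]
  have cos_continuous : Continuous fun t => (ENNReal.ofReal (cos t)).toReal := by
    simp only [ENNReal.toReal_ofReal']
    fun_prop
  exact (cos_continuous.smul hF).continuousOn.integrableOn_Icc

theorem ae_latitudeMeasure_mem_Icc :
    ∀ᵐ t ∂latitudeMeasure, t ∈ Set.Icc (-(π / 2)) (π / 2) := by
  rw [latitudeMeasure_eq]
  exact Measure.ae_smul_measure ((withDensity_absolutelyContinuous _ _).ae_le
    (ae_restrict_mem measurableSet_Icc)) _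

theorem integral_latitudeMeasure (F : ℝ → ℝ) :
    ∫ t, F t ∂latitudeMeasure = 2 * π * ∫ t in -(π / 2)..π / 2, F t * cos t := by
  have density : ∫ t in Set.Icc (-(π / 2)) (π / 2), (ENNReal.ofReal (cos t)).toReal • F t =
      ∫ t in Set.Icc (-(π / 2)) (π / 2), F t * cos t :=
    setIntegral_congr_fun measurableSet_Icc fun t ht => by
      simp only [ENNReal.toReal_ofReal (cos_nonneg_of_mem_Icc ht), smul_eq_mul, mul_comm]
  rw [latitudeMeasure_eq, integral_smul_measure, ENNReal.toReal_ofReal (by positivity),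
    integral_withDensity_eq_integral_toReal_smul (by fun_prop)
      (Eventually.of_forall fun _ => ENNReal.ofReal_lt_top), density,
    intervalIntegral.integral_of_le (by linarith [pi_pos]), integral_Icc_eq_integral_Ioc,
    smul_eq_mul]

theorem integral_latitudeMeasure_eval_sin (p : ℝ[X]) :
    ∫ t, p.eval (sin t) ∂latitudeMeasure = 2 * π * polyIntegral p := by
  rw [integral_latitudeMeasure, polyIntegral_apply]
  congr 1
  simpa using intervalIntegral.integral_comp_mul_deriv (a := -(π / 2)) (b := π / 2)
    (fun x _ => hasDerivAt_sin x) continuous_cos.continuousOn p.continuous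

/-- The zonal spherical harmonic `Y_l^0` as a function of the latitude. -/
def zonalHarmonic (l : ℕ) (t : ℝ) : ℝ := alphaY l 0 * (legendreP l).eval (sin t)

/-- The derivative of `zonalHarmonic l`. -/
def zonalHarmonicDeriv (l : ℕ) (t : ℝ) : ℝ :=
  alphaY l 0 * ((derivative (legendreP l)).eval (sin t) * cos t)

theorem hasDerivAt_zonalHarmonic (l : ℕ) (t : ℝ) :
    HasDerivAt (zonalHarmonic l) (zonalHarmonicDeriv l t) t :=
  (((legendreP l).hasDerivAt (sin t)).comp t (hasDerivAt_sin t)).const_mul _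

theorem continuous_zonalHarmonic (l : ℕ) : Continuous (zonalHarmonic l) :=
  continuous_const.mul ((legendreP l).continuous.comp continuous_sin)

theorem continuous_zonalHarmonicDeriv (l : ℕ) : Continuous (zonalHarmonicDeriv l) :=
  continuous_const.mul
    (((derivative (legendreP l)).continuous.comp continuous_sin).mul continuous_cos)

theorem alphaY_zero (l : ℕ) : alphaY l 0 = √((2 * l + 1) / (4 * π)) := by
  simp only [alphaY, abs_zero, add_zero, Int.zero_ediv, zpow_zero, one_mul, Int.natAbs_zero,
    tsub_zero]
  rw [mul_div_mul_right _ _ (by positivity)]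

theorem alphaY_zero_pos (l : ℕ) : 0 < alphaY l 0 := by
  rw [alphaY_zero]
  positivity

theorem alphaY_zero_sq (l : ℕ) : alphaY l 0 ^ 2 = (2 * l + 1) / (4 * π) := by
  rw [alphaY_zero, Real.sq_sqrt (by positivity)]

theorem alphaY_zero_le (l : ℕ) : alphaY l 0 ≤ ((l : ℝ) + 1) ^ (1 / 2 : ℝ) := by
  rw [alphaY_zero, Real.sqrt_eq_rpow]
  gcongr
  rw [div_le_iff₀ (by positivity)]
  nlinarith [pi_gt_three, l.cast_nonneg (α := ℝ)]

theorem alphaY_zero_mul_le (l : ℕ) :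
    alphaY l 0 * ((l : ℝ) + 1) ≤ ((l : ℝ) + 1) ^ (3 / 2 : ℝ) := by
  calc alphaY l 0 * ((l : ℝ) + 1) ≤ ((l : ℝ) + 1) ^ (1 / 2 : ℝ) * ((l : ℝ) + 1) ^ (1 : ℝ) := by
        rw [Real.rpow_one]
        gcongr
        exact alphaY_zero_le l
    _ = ((l : ℝ) + 1) ^ (3 / 2 : ℝ) := by rw [← Real.rpow_add (by positivity)]; norm_num

theorem abs_zonalHarmonic_le (l : ℕ) (t : ℝ) : |zonalHarmonic l t| ≤ alphaY l 0 := by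
  rw [zonalHarmonic, abs_mul, abs_of_pos (alphaY_zero_pos l)]
  exact mul_le_of_le_one_right (alphaY_zero_pos l).le
    (abs_eval_legendreP_le_one l ⟨neg_one_le_sin t, sin_le_one t⟩)

theorem abs_zonalHarmonicDeriv_le (l : ℕ) (t : ℝ) :
    |zonalHarmonicDeriv l t| ≤ ((l : ℝ) + 1) ^ (3 / 2 : ℝ) := by
  rw [zonalHarmonicDeriv, abs_mul, abs_of_pos (alphaY_zero_pos l)]
  exact (mul_le_mul_of_nonneg_left (abs_eval_sin_derivative_legendreP_mul_cos_le l t)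
    (alphaY_zero_pos l).le).trans (alphaY_zero_mul_le l)

theorem zonalHarmonic_mul (l k : ℕ) (t : ℝ) : zonalHarmonic l t * zonalHarmonic k t =
    alphaY l 0 * alphaY k 0 * (legendreP l * legendreP k).eval (sin t) := by
  simp only [zonalHarmonic, eval_mul]
  ring

theorem zonalHarmonicDeriv_mul (l k : ℕ) (t : ℝ) :
    zonalHarmonicDeriv l t * zonalHarmonicDeriv k t = alphaY l 0 * alphaY k 0 *
      ((1 - X ^ 2) * derivative (legendreP l) * derivative (legendreP k)).eval (sin t) := by
  simp only [zonalHarmonicDeriv, eval_mul, eval_sub, eval_one, eval_pow, eval_X, ← cos_sq']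
  ring

theorem isContinuousOrthonormal_zonalHarmonic :
    IsContinuousOrthonormal latitudeMeasure zonalHarmonic where
  continuous := continuous_zonalHarmonic
  integral_mul l k := by
    simp only [zonalHarmonic_mul, integral_const_mul, integral_latitudeMeasure_eval_sin]
    split_ifs with h
    · subst h
      have norm := polyIntegral_legendreP_sq l
      rw [← sq, alphaY_zero_sq]
      field_simp
      linear_combination 2 * norm
    · rw [polyIntegral_legendreP_mul_legendreP_of_ne h, mul_zero, mul_zero]

theorem integral_zonalHarmonicDeriv_mul (l k : ℕ) :
    ∫ t, zonalHarmonicDeriv l t * zonalHarmonicDeriv k t ∂latitudeMeasure =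
      l * (l + 1) * if l = k then 1 else 0 := by
  rw [← isContinuousOrthonormal_zonalHarmonic.integral_mul l k]
  simp only [zonalHarmonic_mul, zonalHarmonicDeriv_mul, integral_const_mul,
    integral_latitudeMeasure_eval_sin, polyIntegral_derivative_legendreP_mul]
  ring

theorem integral_eval_sin_mul_zonalHarmonic {p : ℝ[X]} {L : ℕ} (h : p.degree < L) :
    ∫ t, p.eval (sin t) * zonalHarmonic L t ∂latitudeMeasure = 0 := by
  have factor (t : ℝ) : p.eval (sin t) * zonalHarmonic L t =
      alphaY L 0 * (p * legendreP L).eval (sin t) := by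
    rw [zonalHarmonic, eval_mul]
    ring
  simp only [factor, integral_const_mul, integral_latitudeMeasure_eval_sin,
    polyIntegral_mul_legendreP_of_degree_lt h, mul_zero]

theorem degree_one_sub_X_sq_mul_derivative_mul_derivative_le (l k : ℕ) :
    ((1 - X ^ 2) * derivative (legendreP l) * derivative (legendreP k)).degree ≤
      ((l + k : ℕ) : WithBot ℕ) := by
  have degree_derivative_le (n : ℕ) : (derivative (legendreP n)).degree + 1 ≤ n := by
    rw [← degree_legendreP n]
    exact Nat.WithBot.add_one_le_of_lt (degree_derivative_lt (legendreSequence.ne_zero n))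
  have degree_weight : (1 - X ^ 2 : ℝ[X]).degree ≤ 2 := by compute_degree
  calc _ ≤ (2 : WithBot ℕ) + (derivative (legendreP l)).degree +
          (derivative (legendreP k)).degree := by
        rw [degree_mul, degree_mul]
        gcongr
    _ = ((derivative (legendreP l)).degree + 1) + ((derivative (legendreP k)).degree + 1) := by
        rw [← one_add_one_eq_two]
        ac_rfl
    _ ≤ _ := by
        push_cast
        exact add_le_add (degree_derivative_le l) (degree_derivative_le k)

theorem isDerivativeFamily_zonalHarmonicDeriv :
    IsDerivativeFamily latitudeMeasure zonalHarmonic zonalHarmonicDeriv where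
  continuous := continuous_zonalHarmonicDeriv
  abs_apply_le := abs_zonalHarmonicDeriv_le
  orthogonal l k h := by simp only [integral_zonalHarmonicDeriv_mul, if_neg h, mul_zero]
  integral_sq_le l := by
    simp only [sq (zonalHarmonicDeriv l _), integral_zonalHarmonicDeriv_mul, if_true, mul_one]
    nlinarith [l.cast_nonneg (α := ℝ)]
  integral_mul_mul l k L h := by
    simp only [zonalHarmonicDeriv_mul, mul_assoc (alphaY l 0 * alphaY k 0), integral_const_mul]
    rw [integral_eval_sin_mul_zonalHarmonic, mul_zero]
    exact (degree_one_sub_X_sq_mul_derivative_mul_derivative_le l k).trans_lt (by exact_mod_cast h)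

theorem isDerivativeFamily_mul_zonalHarmonic :
    IsDerivativeFamily latitudeMeasure zonalHarmonic
      fun l t => ((l : ℝ) + 1) * zonalHarmonic l t where
  continuous l := continuous_const.mul (continuous_zonalHarmonic l)
  abs_apply_le l t := by
    rw [abs_mul, abs_of_nonneg (by positivity), mul_comm]
    exact (mul_le_mul_of_nonneg_right (abs_zonalHarmonic_le l t) (by positivity)).trans
      (alphaY_zero_mul_le l)
  orthogonal l k h := by
    simp only [mul_mul_mul_comm _ (zonalHarmonic l _), integral_const_mul,
      isContinuousOrthonormal_zonalHarmonic.integral_mul, if_neg h, mul_zero]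
  integral_sq_le l := by
    simp only [mul_pow, sq (zonalHarmonic l _), integral_const_mul,
      isContinuousOrthonormal_zonalHarmonic.integral_mul, if_true, mul_one, le_refl]
  integral_mul_mul l k L h := by
    simp only [mul_mul_mul_comm _ (zonalHarmonic l _), zonalHarmonic_mul,
      mul_assoc _ (eval _ _), ← mul_assoc _ (alphaY l 0 * alphaY k 0), integral_const_mul]
    rw [integral_eval_sin_mul_zonalHarmonic, mul_zero]
    rw [degree_mul, degree_legendreP, degree_legendreP]
    exact_mod_cast h

theorem integral_mul_eval_sin_eq_zero {h : ℝ → ℝ} (hh : Continuous h)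
    (orth : ∀ l, ∫ t, h t * zonalHarmonic l t ∂latitudeMeasure = 0) (p : ℝ[X]) :
    ∫ t, h t * p.eval (sin t) ∂latitudeMeasure = 0 := by
  have hp : p ∈ Submodule.span ℝ (Set.range legendreSequence) := by
    rw [legendreSequence.span isUnit_leadingCoeff_legendreSequence]
    exact Submodule.mem_top
  induction hp using Submodule.span_induction with
  | mem q hq =>
    obtain ⟨l, rfl⟩ := hq
    have factor (t : ℝ) : h t * zonalHarmonic l t =
        alphaY l 0 * (h t * (legendreP l).eval (sin t)) := by rw [zonalHarmonic]; ring
    have orth_l := orth l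
    simp only [factor, integral_const_mul] at orth_l
    exact (mul_eq_zero.mp orth_l).resolve_left (alphaY_zero_pos l).ne'
  | zero => simp
  | add q r _ _ hq hr =>
    simp only [eval_add, mul_add]
    rw [integral_add (integrable_latitudeMeasure (by fun_prop))
      (integrable_latitudeMeasure (by fun_prop)), hq, hr, add_zero]
  | smul c q _ hq => simp only [eval_smul, smul_eq_mul, mul_left_comm _ c, integral_const_mul, hq,
      mul_zero]

-- By Weierstrass, `h ∘ arcsin` is a uniform limit of polynomials on `[-1, 1]`, so `h` is orthogonal
-- to itself.
theorem integral_sq_eq_zero_of_orthogonal {h : ℝ → ℝ} (hh : Continuous h)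
    (orth : ∀ l, ∫ t, h t * zonalHarmonic l t ∂latitudeMeasure = 0) :
    ∫ t, h t ^ 2 ∂latitudeMeasure = 0 := by
  refine le_antisymm (le_of_forall_pos_le_add fun δ hδ => ?_) (integral_nonneg fun t => sq_nonneg _)
  set A := ∫ t, |h t| ∂latitudeMeasure
  have hA : 0 ≤ A := integral_nonneg fun t => abs_nonneg _
  obtain ⟨p, hp⟩ := exists_polynomial_near_of_continuousOn (-1) 1 (fun x => h (arcsin x))
    (by fun_prop) (δ / (A + 1)) (by positivity)
  have pointwise : ∀ᵐ t ∂latitudeMeasure,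
      h t ^ 2 ≤ δ / (A + 1) * |h t| + h t * p.eval (sin t) := by
    filter_upwards [ae_latitudeMeasure_mem_Icc] with t ht
    have close := hp (sin t) ⟨neg_one_le_sin t, sin_le_one t⟩
    rw [arcsin_sin ht.1 ht.2, abs_sub_comm] at close
    have product_le : h t * (h t - p.eval (sin t)) ≤ δ / (A + 1) * |h t| :=
      calc h t * (h t - p.eval (sin t)) ≤ |h t - p.eval (sin t)| * |h t| := by
            rw [← abs_mul, mul_comm]
            exact le_abs_self _
        _ ≤ δ / (A + 1) * |h t| := by gcongr
    linarith
  calc ∫ t, h t ^ 2 ∂latitudeMeasure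
      ≤ ∫ t, δ / (A + 1) * |h t| + h t * p.eval (sin t) ∂latitudeMeasure :=
        integral_mono_ae (integrable_latitudeMeasure (by fun_prop))
          (integrable_latitudeMeasure (by fun_prop)) pointwise
    _ = δ * (A / (A + 1)) := by
        rw [integral_add (integrable_latitudeMeasure (by fun_prop))
          (integrable_latitudeMeasure (by fun_prop)), integral_const_mul,
          integral_mul_eval_sin_eq_zero hh orth]
        ring
    _ ≤ 0 + δ := by
        rw [zero_add]
        exact mul_le_of_le_one_right hδ.le (div_le_one_of_le₀ (by linarith) (by linarith))

theorem eqOn_zero_of_orthogonal {h : ℝ → ℝ} (hh : Continuous h)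
    (orth : ∀ l, ∫ t, h t * zonalHarmonic l t ∂latitudeMeasure = 0) :
    Set.EqOn h 0 (Set.Icc (-(π / 2)) (π / 2)) := by
  have integral_zero : ∫ t in -(π / 2)..π / 2, h t ^ 2 * cos t = 0 := by
    have := integral_sq_eq_zero_of_orthogonal hh orth
    rw [integral_latitudeMeasure] at this
    exact (mul_eq_zero.mp this).resolve_left two_pi_pos.ne'
  have zero_on_Ioo : Set.EqOn h 0 (Set.Ioo (-(π / 2)) (π / 2)) := by
    intro t ht
    by_contra hne
    refine integral_zero.not_gt (intervalIntegral.integral_pos (by linarith [pi_pos])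
      (by fun_prop) (fun x hx => ?_) ⟨t, Set.Ioo_subset_Icc_self ht, ?_⟩)
    · exact mul_nonneg (sq_nonneg _) (cos_nonneg_of_mem_Icc (Set.Ioc_subset_Icc_self hx))
    · exact mul_pos (sq_pos_of_ne_zero hne) (cos_pos_of_mem_Ioo ht)
  rw [← closure_Ioo (by linarith [pi_pos])]
  exact zero_on_Ioo.closure hh continuous_const

end Zonal

section ZonalSeries

theorem IsContinuousOrthonormal.integral_tsum_mul {X : Type*} [TopologicalSpace X]
    [MeasurableSpace X] {μ : Measure X} {y : ℕ → X → ℝ}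
    (hy : IsContinuousOrthonormal μ y) (hμ : ∀ F : X → ℝ, Continuous F → Integrable F μ)
    {a b : ℕ → ℝ} (hb : Summable b) (hab : ∀ l x, |a l * y l x| ≤ b l) (k : ℕ) :
    ∫ x, (∑' l, a l * y l x) * y k x ∂μ = a k := by
  have y_continuous := hy.continuous
  have coefficients (l : ℕ) : ∫ x, a l * y l x * y k x ∂μ = if l = k then a k else 0 := by
    simp only [mul_assoc, integral_const_mul, hy.integral_mul]
    split_ifs with h <;> simp [h]
  have summable (x : X) : Summable fun l => a l * y l x := .of_norm_bounded hb fun l => hab l x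
  have hasSum_integral := hasSum_integral_of_dominated_convergence (μ := μ)
    (F := fun l x => a l * y l x * y k x) (f := fun x => (∑' l, a l * y l x) * y k x)
    (fun l x => b l * |y k x|)
    (fun l => (hμ _ (by fun_prop)).aestronglyMeasurable)
    (fun l => Eventually.of_forall fun x => by
      rw [norm_mul]
      exact mul_le_mul_of_nonneg_right (hab l x) (abs_nonneg _))
    (Eventually.of_forall fun x => hb.mul_right _)
    (by simpa only [tsum_mul_right] using hμ _ (by fun_prop))
    (Eventually.of_forall fun x => (summable x).hasSum.mul_right _)
  rw [← hasSum_integral.tsum_eq]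
  simp only [coefficients, tsum_ite_eq]

theorem abs_mul_zonalHarmonic_le (a : ℕ → ℝ) (l : ℕ) (t : ℝ) :
    |a l * zonalHarmonic l t| ≤ ((l : ℝ) + 1) ^ (3 / 2 : ℝ) * |a l| := by
  refine le_trans ?_ (isDerivativeFamily_mul_zonalHarmonic.abs_mul_le a l t)
  rw [mul_left_comm, abs_mul ((l : ℝ) + 1)]
  exact le_mul_of_one_le_left (abs_nonneg _)
    ((le_add_of_nonneg_left l.cast_nonneg).trans (le_abs_self _))

/-- The coefficients of `F` in the orthonormal system of zonal harmonics. -/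
def zonalCoeff (F : ℝ → ℝ) (l : ℕ) : ℝ := ∫ t, F t * zonalHarmonic l t ∂latitudeMeasure

theorem zonalCoeff_add {F G : ℝ → ℝ} (hF : Continuous F) (hG : Continuous G) :
    zonalCoeff (F + G) = zonalCoeff F + zonalCoeff G := by
  funext l
  simp only [zonalCoeff, Pi.add_apply, add_mul]
  exact integral_add (integrable_latitudeMeasure (hF.mul (continuous_zonalHarmonic l)))
    (integrable_latitudeMeasure (hG.mul (continuous_zonalHarmonic l)))

theorem zonalCoeff_sub {F G : ℝ → ℝ} (hF : Continuous F) (hG : Continuous G) :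
    zonalCoeff (F - G) = zonalCoeff F - zonalCoeff G := by
  funext l
  simp only [zonalCoeff, Pi.sub_apply, sub_mul]
  exact integral_sub (integrable_latitudeMeasure (hF.mul (continuous_zonalHarmonic l)))
    (integrable_latitudeMeasure (hG.mul (continuous_zonalHarmonic l)))

theorem eqOn_tsum_zonalCoeff_mul {F : ℝ → ℝ} (hF : Continuous F) (ha : Majorized (zonalCoeff F)) :
    Set.EqOn F (fun t => ∑' l, zonalCoeff F l * zonalHarmonic l t)
      (Set.Icc (-(π / 2)) (π / 2)) := by
  have continuous_series : Continuous fun t => ∑' l, zonalCoeff F l * zonalHarmonic l t :=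
    continuous_tsum (fun l => continuous_const.mul (continuous_zonalHarmonic l)) ha
      (abs_mul_zonalHarmonic_le _)
  refine fun t ht => sub_eq_zero.mp
    (eqOn_zero_of_orthogonal (hF.sub continuous_series) (fun l => ?_) ht)
  change zonalCoeff (F - fun t => ∑' l, zonalCoeff F l * zonalHarmonic l t) l = 0
  rw [zonalCoeff_sub hF continuous_series, Pi.sub_apply, sub_eq_zero]
  exact (isContinuousOrthonormal_zonalHarmonic.integral_tsum_mul
    (fun _ => integrable_latitudeMeasure) ha (abs_mul_zonalHarmonic_le _) l).symm

end ZonalSeries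

/-! ## The maximum principle -/

section MaximumPrinciple

open InnerProductSpace Topology
open scoped Laplacian

theorem deriv_deriv_nonpos_of_isLocalMax {f : ℝ → ℝ} {t : ℝ} (hf : ContinuousAt f t)
    (hmax : IsLocalMax f t) : deriv (deriv f) t ≤ 0 := by
  by_contra! hpos
  have hmin : IsLocalMin f t := isLocalMin_of_deriv_deriv_pos hpos hmax.deriv_eq_zero hf
  have locally_const : f =ᶠ[𝓝 t] fun _ => f t := by
    filter_upwards [hmax, hmin] with x h_le h_ge using le_antisymm h_le h_ge
  rw [locally_const.deriv.deriv_eq] at hpos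
  simp at hpos

theorem fderiv_fderiv_apply_nonpos_of_isLocalMax {E : Type*} [NormedAddCommGroup E]
    [NormedSpace ℝ E] {f : E → ℝ} {x : E} (hf : ContDiffAt ℝ 2 f x) (hmax : IsLocalMax f x)
    (e : E) : fderiv ℝ (fderiv ℝ f) x e e ≤ 0 := by
  let line : ℝ → E := fun t => x + t • e
  have line_zero : line 0 = x := by simp [line]
  have hasDerivAt_line (t : ℝ) : HasDerivAt line e t :=
    (((hasDerivAt_id t).smul_const e).const_add x).congr_deriv (one_smul ℝ e)
  have tendsto_line : Tendsto line (𝓝 0) (𝓝 x) := by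
    simpa only [line_zero] using (hasDerivAt_line 0).continuousAt.tendsto
  have deriv_line : deriv (f ∘ line) =ᶠ[𝓝 0] fun t => fderiv ℝ f (line t) e := by
    filter_upwards [tendsto_line.eventually (hf.eventually (by simp))] with t ht
    exact ((ht.differentiableAt two_ne_zero).hasFDerivAt.comp_hasDerivAt t
      (hasDerivAt_line t)).deriv
  have hasFDerivAt_fderiv : HasFDerivAt (fderiv ℝ f) (fderiv ℝ (fderiv ℝ f) x) (line 0) := by
    rw [line_zero]
    exact ((hf.fderiv_right (m := 1) (by norm_num)).differentiableAt one_ne_zero).hasFDerivAt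
  have deriv_deriv_line : deriv (deriv (f ∘ line)) 0 = fderiv ℝ (fderiv ℝ f) x e e := by
    rw [deriv_line.deriv_eq]
    simpa using ((hasFDerivAt_fderiv.comp_hasDerivAt 0 (hasDerivAt_line 0)).clm_apply
      (hasDerivAt_const 0 e)).deriv
  rw [← deriv_deriv_line]
  have continuousAt_f : ContinuousAt f (line 0) := by rw [line_zero]; exact hf.continuousAt
  refine deriv_deriv_nonpos_of_isLocalMax
    (continuousAt_f.comp (hasDerivAt_line 0).continuousAt) ?_
  filter_upwards [tendsto_line.eventually hmax] with t ht
  simpa only [Function.comp_apply, line_zero] using ht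

variable {E : Type*} [NormedAddCommGroup E] [InnerProductSpace ℝ E] [FiniteDimensional ℝ E]

theorem laplacian_nonpos_of_isLocalMax {f : E → ℝ} {x : E} (hf : ContDiffAt ℝ 2 f x)
    (hmax : IsLocalMax f x) : Δ f x ≤ 0 := by
  simp only [laplacian_eq_iteratedFDeriv_stdOrthonormalBasis, iteratedFDeriv_two_apply]
  exact Finset.sum_nonpos fun i _ => fderiv_fderiv_apply_nonpos_of_isLocalMax hf hmax _

theorem laplacian_norm_sq (x : E) : Δ (fun y : E => ‖y‖ ^ 2) x = 2 * Module.finrank ℝ E := by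
  have hessian : fderiv ℝ (fderiv ℝ fun y : E => ‖y‖ ^ 2) x =
      (2 • innerSL ℝ : E →L[ℝ] E →L[ℝ] ℝ) := by
    rw [fderiv_norm_sq]
    exact (2 • innerSL ℝ : E →L[ℝ] E →L[ℝ] ℝ).fderiv
  simp only [laplacian_eq_iteratedFDeriv_stdOrthonormalBasis, iteratedFDeriv_two_apply,
    hessian]
  have inner_self (i : Fin (Module.finrank ℝ E)) : innerSL ℝ (stdOrthonormalBasis ℝ E i)
      (stdOrthonormalBasis ℝ E i) = 1 := by simp [innerSL_apply_apply]
  simp [inner_self, mul_comm]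

variable [Nontrivial E] {f : E → ℝ} {U : Set E} {M : ℝ}

theorem not_isLocalMax_add_mul_norm_sq {x : E} (hf : HarmonicAt f x) {ε : ℝ} (hε : 0 < ε) :
    ¬ IsLocalMax (fun y => f y + ε * ‖y‖ ^ 2) x := by
  intro hmax
  have contDiffAt_norm_sq : ContDiffAt ℝ 2 (fun y : E => ‖y‖ ^ 2) x :=
    (contDiff_norm_sq ℝ).contDiffAt
  have laplacian_eq : Δ (fun y => f y + ε * ‖y‖ ^ 2) x = ε * (2 * Module.finrank ℝ E) := by
    rw [← laplacian_norm_sq x, ← smul_eq_mul, ← laplacian_smul ε contDiffAt_norm_sq]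
    refine (hf.1.laplacian_add (contDiffAt_norm_sq.const_smul ε)).trans ?_
    rw [hf.2.self_of_nhds, Pi.zero_apply, zero_add]
    rfl
  have finrank_pos : 0 < (Module.finrank ℝ E : ℝ) := by exact_mod_cast Module.finrank_pos
  refine (laplacian_nonpos_of_isLocalMax (hf.1.add (contDiffAt_const.mul contDiffAt_norm_sq))
    hmax).not_gt ?_
  exact laplacian_eq ▸ by positivity

-- A violation of the bound survives adding `ε ‖y‖²`, whose Laplacian is positive.
theorem le_of_harmonicContOnCl_of_isBounded (hU : Bornology.IsBounded U)
    (hf : HarmonicContOnCl f U) (hM : ∀ x ∈ frontier U, f x ≤ M) {x : E} (hx : x ∈ closure U) :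
    f x ≤ M := by
  by_contra! hlt
  obtain ⟨R, hR⟩ := hU.closure.exists_norm_le
  let ε := (f x - M) / (2 * (R ^ 2 + 1))
  have hε : 0 < ε := div_pos (sub_pos.mpr hlt) (by positivity)
  have ε_mul_lt : ε * R ^ 2 < f x - M := by
    have : ε * (2 * (R ^ 2 + 1)) = f x - M := div_mul_cancel₀ _ (by positivity)
    nlinarith [sq_nonneg R]
  obtain ⟨y, hy, hmax⟩ := hU.isCompact_closure.exists_isMaxOn ⟨x, hx⟩
    (hf.continuousOn.add (by fun_prop : ContinuousOn (fun y : E => ε * ‖y‖ ^ 2) (closure U)))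
  have fx_le : f x ≤ f y + ε * ‖y‖ ^ 2 := by
    have : f x + ε * ‖x‖ ^ 2 ≤ f y + ε * ‖y‖ ^ 2 := hmax hx
    nlinarith [sq_nonneg ‖x‖]
  have norm_sq_le : ε * ‖y‖ ^ 2 ≤ ε * R ^ 2 := by gcongr; exact hR y hy
  have y_mem_interior : y ∈ interior U := by
    by_contra hy_interior
    linarith [hM y ⟨hy, hy_interior⟩]
  exact not_isLocalMax_add_mul_norm_sq (hf.harmonicOnNhd y (interior_subset y_mem_interior)) hε
    (hmax.isLocalMax (mem_of_superset (mem_interior_iff_mem_nhds.mp y_mem_interior) subset_closure))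

theorem le_of_harmonicContOnCl_of_tendsto_zero (hf : HarmonicContOnCl f U)
    (lim : Tendsto f (Bornology.cobounded E) (𝓝 0)) (hM₀ : 0 ≤ M)
    (hM : ∀ x ∈ frontier U, f x ≤ M) {x : E} (hx : x ∈ closure U) : f x ≤ M := by
  refine le_of_forall_pos_le_add fun δ hδ => ?_
  have small_at_infinity : ∀ᶠ R in atTop, ∀ y : E, R ≤ ‖y‖ → f y ≤ δ := by
    obtain ⟨r, -, hr⟩ := (hasBasis_cobounded_norm.eventually_iff).mp (lim.eventually_le_const hδ)
    filter_upwards [eventually_ge_atTop r] with R hR y hy using hr (hR.trans hy)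
  obtain ⟨R, hR, hxR⟩ := (small_at_infinity.and (eventually_gt_atTop ‖x‖)).exists
  have x_mem_ball : x ∈ Metric.ball 0 R := by simpa using hxR
  refine le_of_harmonicContOnCl_of_isBounded (Metric.isBounded_ball.subset Set.inter_subset_right)
    (hf.mono (Set.inter_subset_left (t := Metric.ball 0 R))) (fun y hy => ?_)
    (Metric.isOpen_ball.closure_inter ⟨hx, x_mem_ball⟩)
  rcases frontier_inter_subset _ _ hy with ⟨hy, -⟩ | ⟨-, hy⟩
  · linarith [hM y hy]
  · have : R = ‖y‖ := by simpa [eq_comm] using Metric.frontier_ball_subset_sphere hy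
    linarith [hR y this.le]

end MaximumPrinciple

section DecayingHarmonic

open InnerProductSpace Topology

variable {E : Type*} [NormedAddCommGroup E] [InnerProductSpace ℝ E] [FiniteDimensional ℝ E]
  {U : Set E}

/-- Functions that are harmonic on `U`, continuous up to the boundary of `U`, and tend to zero at
infinity. -/
structure IsDecayingHarmonicOn (f : E → ℝ) (U : Set E) : Prop where
  harmonicContOnCl : HarmonicContOnCl f U
  tendsto_zero : Tendsto f (Bornology.cobounded E) (𝓝 0)

namespace IsDecayingHarmonicOn

variable {f g : E → ℝ}

theorem neg (hf : IsDecayingHarmonicOn f U) : IsDecayingHarmonicOn (-f) U :=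
  ⟨hf.harmonicContOnCl.neg, neg_zero (G := ℝ) ▸ hf.tendsto_zero.neg⟩

theorem sub (hf : IsDecayingHarmonicOn f U) (hg : IsDecayingHarmonicOn g U) :
    IsDecayingHarmonicOn (f - g) U :=
  ⟨hf.harmonicContOnCl.sub hg.harmonicContOnCl,
    sub_zero (0 : ℝ) ▸ hf.tendsto_zero.sub hg.tendsto_zero⟩

theorem const_smul (c : ℝ) (hf : IsDecayingHarmonicOn f U) : IsDecayingHarmonicOn (c • f) U :=
  ⟨hf.harmonicContOnCl.const_smul c, smul_zero (A := ℝ) c ▸ hf.tendsto_zero.const_smul c⟩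

theorem sum {ι : Type*} (S : Finset ι) {f : ι → E → ℝ}
    (hf : ∀ i ∈ S, IsDecayingHarmonicOn (f i) U) :
    IsDecayingHarmonicOn (fun x => ∑ i ∈ S, f i x) U := by
  classical
  induction S using Finset.induction_on with
  | empty => simpa using ⟨harmonicContOnCl_const, tendsto_const_nhds⟩
  | insert i S hi ih =>
    simp only [Finset.sum_insert hi]
    obtain ⟨hfi, hfS⟩ := Finset.forall_mem_insert .. |>.mp hf
    exact ⟨hfi.harmonicContOnCl.fun_add (ih hfS).harmonicContOnCl,
      add_zero (0 : ℝ) ▸ hfi.tendsto_zero.add (ih hfS).tendsto_zero⟩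

variable [Nontrivial E]

theorem abs_le (hf : IsDecayingHarmonicOn f U) {M : ℝ} (hM₀ : 0 ≤ M)
    (hM : ∀ x ∈ frontier U, |f x| ≤ M) {x : E} (hx : x ∈ closure U) : |f x| ≤ M :=
  abs_le'.mpr
    ⟨le_of_harmonicContOnCl_of_tendsto_zero hf.harmonicContOnCl hf.tendsto_zero hM₀
      (fun y hy => (le_abs_self _).trans (hM y hy)) hx,
    le_of_harmonicContOnCl_of_tendsto_zero hf.neg.harmonicContOnCl hf.neg.tendsto_zero hM₀
      (fun y hy => (neg_le_abs _).trans (hM y hy)) hx⟩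

theorem tendstoUniformlyOn_closure {ι : Type*} {l : Filter ι} {F : ι → E → ℝ}
    (hf : IsDecayingHarmonicOn f U) (hF : ∀ i, IsDecayingHarmonicOn (F i) U)
    (h : TendstoUniformlyOn F f l (frontier U)) : TendstoUniformlyOn F f l (closure U) := by
  rw [Metric.tendstoUniformlyOn_iff] at h ⊢
  intro ε hε
  filter_upwards [h (ε / 2) (half_pos hε)] with i hi x hx
  exact ((hf.sub (hF i)).abs_le (half_pos hε).le (fun y hy => (hi y hy).le) hx).trans_lt
    (half_lt_self hε)

theorem eqOn_closure_tsum {F : ℕ → E → ℝ} (hf : IsDecayingHarmonicOn f U)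
    (hF : ∀ n, IsDecayingHarmonicOn (F n) U) {b : ℕ → ℝ} (hb : Summable b)
    (hFb : ∀ n, ∀ x ∈ frontier U, |F n x| ≤ b n)
    (h : Set.EqOn f (fun x => ∑' n, F n x) (frontier U)) :
    Set.EqOn f (fun x => ∑' n, F n x) (closure U) := by
  intro x hx
  have uniform_frontier : TendstoUniformlyOn (fun N x => ∑ n ∈ Finset.range N, F n x) f atTop
      (frontier U) := (tendstoUniformlyOn_tsum_nat hb hFb).congr_right h.symm
  have partial_sums := (hf.tendstoUniformlyOn_closure
    (fun N => sum (Finset.range N) fun n _ => hF n) uniform_frontier).tendsto_at hx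
  have summable : Summable fun n => F n x := .of_norm_bounded hb.abs fun n =>
    (hF n).abs_le (abs_nonneg _) (fun y hy => (hFb n y hy).trans (le_abs_self _)) hx
  exact tendsto_nhds_unique partial_sums summable.hasSum.tendsto_sum_nat

end IsDecayingHarmonicOn

end DecayingHarmonic

/-! ## Solid zonal harmonics -/

section HomogeneousZonal

open InnerProductSpace Polynomial Topology
open scoped Laplacian

variable {E : Type*} [NormedAddCommGroup E] [InnerProductSpace ℝ E]

/-- The function `y ↦ ‖y‖⁻ⁿ Q(⟪e, y⟫ / ‖y‖)`, homogeneous of degree `-n` and zonal about the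
axis `e`. -/
def homogeneousZonal (e : E) (n : ℕ) (Q : ℝ[X]) (y : E) : ℝ :=
  ‖y‖⁻¹ ^ n * Q.eval (inner ℝ e y * ‖y‖⁻¹)

theorem abs_homogeneousZonal_legendreP_le {e : E} (he : ‖e‖ = 1) (n l : ℕ) (y : E) :
    |homogeneousZonal e n (legendreP l) y| ≤ ‖y‖⁻¹ ^ n := by
  have cosine_mem : inner ℝ e y * ‖y‖⁻¹ ∈ Set.Icc (-1) 1 := by
    have cauchy_schwarz := abs_le.mp (abs_real_inner_div_norm_mul_norm_le_one e y)
    rwa [he, one_mul, div_eq_mul_inv] at cauchy_schwarz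
  rw [homogeneousZonal, abs_mul, abs_of_nonneg (by positivity)]
  exact mul_le_of_le_one_right (by positivity) (abs_eval_legendreP_le_one l cosine_mem)

theorem hasFDerivAt_norm_inv {y : E} (hy : y ≠ 0) :
    HasFDerivAt (fun y : E => ‖y‖⁻¹) (-(‖y‖⁻¹ ^ 3) • innerSL ℝ y) y := by
  have norm_ne : ‖y‖ ≠ 0 := norm_ne_zero_iff.mpr hy
  have hasFDerivAt_norm : HasFDerivAt (fun y : E => ‖y‖) (‖y‖⁻¹ • innerSL ℝ y) y := by
    have hasFDerivAt_sqrt := (hasStrictFDerivAt_norm_sq y).hasFDerivAt.sqrt (by positivity)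
    simp only [sqrt_sq (norm_nonneg _)] at hasFDerivAt_sqrt
    refine hasFDerivAt_sqrt.congr_fderiv ?_
    ext v
    simp
    field_simp
  refine ((hasDerivAt_inv norm_ne).comp_hasFDerivAt y hasFDerivAt_norm).congr_fderiv ?_
  ext v
  simp
  ring

theorem hasFDerivAt_homogeneousZonal (e : E) (n : ℕ) (Q : ℝ[X]) {y : E} (hy : y ≠ 0) :
    HasFDerivAt (homogeneousZonal e n Q)
      (-homogeneousZonal e (n + 2) (C (n : ℝ) * Q + X * derivative Q) y • innerSL ℝ y +
        homogeneousZonal e (n + 1) (derivative Q) y • innerSL ℝ e) y := by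
  have hasFDerivAt_inv := hasFDerivAt_norm_inv hy
  have hasFDerivAt_pow := (hasDerivAt_pow n ‖y‖⁻¹).comp_hasFDerivAt y hasFDerivAt_inv
  have hasFDerivAt_eval := (Q.hasDerivAt (inner ℝ e y * ‖y‖⁻¹)).comp_hasFDerivAt y
    ((innerSL ℝ e).hasFDerivAt.fun_mul hasFDerivAt_inv)
  refine (hasFDerivAt_pow.fun_mul hasFDerivAt_eval).congr_fderiv ?_
  ext v
  rcases n with _ | n
  all_goals
    simp [homogeneousZonal]
    ring

theorem contDiffAt_homogeneousZonal (e : E) (n : ℕ) (Q : ℝ[X]) {y : E} (hy : y ≠ 0) :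
    ContDiffAt ℝ 2 (homogeneousZonal e n Q) y := by
  have contDiffAt_inv : ContDiffAt ℝ 2 (fun y : E => ‖y‖⁻¹) y :=
    (contDiffAt_id.norm ℝ hy).inv (norm_ne_zero_iff.mpr hy)
  have contDiff_eval : ContDiff ℝ 2 fun x => Q.eval x := by simpa using Q.contDiff_aeval (𝕜 := ℝ) 2
  exact (contDiffAt_inv.pow n).mul (contDiff_eval.contDiffAt.comp y
    ((contDiffAt_const.inner ℝ contDiffAt_id).mul contDiffAt_inv))

theorem fderiv_fderiv_homogeneousZonal (e : E) (n : ℕ) (Q : ℝ[X]) {y : E} (hy : y ≠ 0) (v : E) :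
    fderiv ℝ (fderiv ℝ (homogeneousZonal e n Q)) y v v =
      -(fderiv ℝ (homogeneousZonal e (n + 2) (C (n : ℝ) * Q + X * derivative Q)) y v * inner ℝ y v +
          homogeneousZonal e (n + 2) (C (n : ℝ) * Q + X * derivative Q) y * inner ℝ v v) +
        fderiv ℝ (homogeneousZonal e (n + 1) (derivative Q)) y v * inner ℝ e v := by
  have fderiv_eq : fderiv ℝ (homogeneousZonal e n Q) =ᶠ[𝓝 y] fun z =>
      -homogeneousZonal e (n + 2) (C (n : ℝ) * Q + X * derivative Q) z • innerSL ℝ z +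
        homogeneousZonal e (n + 1) (derivative Q) z • innerSL ℝ e := by
    filter_upwards [isOpen_ne.mem_nhds hy] with z hz
      using (hasFDerivAt_homogeneousZonal e n Q hz).fderiv
  have hasFDerivAt_zonal (m : ℕ) (R : ℝ[X]) :=
    ((contDiffAt_homogeneousZonal e m R hy).differentiableAt two_ne_zero).hasFDerivAt
  have hasFDerivAt_innerSL : HasFDerivAt (fun z : E => innerSL ℝ z)
      (innerSL ℝ : E →L[ℝ] E →L[ℝ] ℝ) y := (innerSL ℝ : E →L[ℝ] E →L[ℝ] ℝ).hasFDerivAt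
  rw [fderiv_eq.fderiv_eq, (((hasFDerivAt_zonal _ _).fun_neg.fun_smul hasFDerivAt_innerSL).fun_add
    ((hasFDerivAt_zonal _ _).smul_const (innerSL ℝ e))).fderiv]
  have innerSL_self : (innerSL ℝ : E →L[ℝ] E →L[ℝ] ℝ) v v = ‖v‖ ^ 2 :=
    real_inner_self_eq_norm_sq v
  simp [innerSL_self]

theorem sum_fderiv_homogeneousZonal_mul_inner {ι : Type*} [Fintype ι] (b : OrthonormalBasis ι ℝ E)
    (e : E) (n : ℕ) (Q : ℝ[X]) {y : E} (hy : y ≠ 0) (x : E) :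
    ∑ i, fderiv ℝ (homogeneousZonal e n Q) y (b i) * inner ℝ x (b i) =
      -homogeneousZonal e (n + 2) (C (n : ℝ) * Q + X * derivative Q) y * inner ℝ y x +
        homogeneousZonal e (n + 1) (derivative Q) y * inner ℝ e x := by
  have sum_inner (z : E) : ∑ i, inner ℝ z (b i) * inner ℝ x (b i) = inner ℝ z x := by
    simpa only [real_inner_comm x] using b.sum_inner_mul_inner z x
  have fderiv_apply (v : E) : fderiv ℝ (homogeneousZonal e n Q) y v =
      -homogeneousZonal e (n + 2) (C (n : ℝ) * Q + X * derivative Q) y * inner ℝ y v +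
        homogeneousZonal e (n + 1) (derivative Q) y * inner ℝ e v := by
    simp [(hasFDerivAt_homogeneousZonal e n Q hy).fderiv]
  simp only [fderiv_apply, add_mul, mul_assoc, Finset.sum_add_distrib, ← Finset.mul_sum, sum_inner]

variable [FiniteDimensional ℝ E]

theorem laplacian_homogeneousZonal {e : E} (he : ‖e‖ = 1) (n : ℕ) (Q : ℝ[X]) {y : E}
    (hy : y ≠ 0) :
    Δ (homogeneousZonal e n Q) y = homogeneousZonal e (n + 2)
      ((1 - X ^ 2) * derivative (derivative Q)
        - C ((Module.finrank ℝ E : ℝ) - 1) * X * derivative Q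
        + C ((n : ℝ) * (n + 2 - Module.finrank ℝ E)) * Q) y := by
  have norm_mul : ‖y‖ ^ 2 * ‖y‖⁻¹ ^ 2 = 1 := by
    rw [← mul_pow, mul_inv_cancel₀ (norm_ne_zero_iff.mpr hy), one_pow]
  let b := stdOrthonormalBasis ℝ E
  have sum_inner_self : ∑ i, inner ℝ (b i) (b i) = (Module.finrank ℝ E : ℝ) := by simp
  rw [laplacian_eq_iteratedFDeriv_stdOrthonormalBasis]
  simp only [iteratedFDeriv_two_apply, Matrix.cons_val_zero, Matrix.cons_val_one,
    fderiv_fderiv_homogeneousZonal e n Q hy]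
  rw [Finset.sum_add_distrib, Finset.sum_neg_distrib, Finset.sum_add_distrib, ← Finset.mul_sum]
  change -(∑ i, fderiv ℝ _ y (b i) * inner ℝ y (b i) + _ * ∑ i, inner ℝ (b i) (b i)) +
    ∑ i, fderiv ℝ _ y (b i) * inner ℝ e (b i) = _
  rw [sum_fderiv_homogeneousZonal_mul_inner b e _ _ hy,
    sum_fderiv_homogeneousZonal_mul_inner b e _ _ hy, sum_inner_self]
  simp only [homogeneousZonal, real_inner_self_eq_norm_sq, he, real_inner_comm e y]
  simp only [derivative_add, derivative_mul, derivative_C, derivative_X, eval_add, eval_sub,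
    eval_mul, eval_pow, eval_C, eval_X, eval_one, Nat.cast_add, Nat.cast_ofNat, Nat.cast_one,
    zero_mul, zero_add, one_mul]
  generalize ‖y‖⁻¹ = ρ at *
  generalize inner ℝ e y = c at *
  generalize (derivative (derivative Q)).eval (c * ρ) = Q₂
  generalize (derivative Q).eval (c * ρ) = Q₁
  generalize Q.eval (c * ρ) = Q₀
  linear_combination ρ ^ (n + 2) * ((n + 2) * (n * Q₀ + c * ρ * Q₁) +
    c * ρ * (n * Q₁ + (Q₁ + c * ρ * Q₂))) * norm_mul

theorem harmonicAt_homogeneousZonal_legendreP (hE : Module.finrank ℝ E = 3) {e : E}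
    (he : ‖e‖ = 1) (l : ℕ) {y : E} (hy : y ≠ 0) :
    HarmonicAt (homogeneousZonal e (l + 1) (legendreP l)) y := by
  refine ⟨contDiffAt_homogeneousZonal e _ _ hy, ?_⟩
  filter_upwards [isOpen_ne.mem_nhds hy] with z hz
  have polynomial_eq_zero : (1 - X ^ 2) * derivative (derivative (legendreP l))
      - C ((Module.finrank ℝ E : ℝ) - 1) * X * derivative (legendreP l)
      + C (((l + 1 : ℕ) : ℝ) * ((l + 1 : ℕ) + 2 - Module.finrank ℝ E)) * legendreP l = 0 := by
    simp only [hE, Nat.cast_add, Nat.cast_one, Nat.cast_ofNat, map_add, map_sub, map_mul,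
      map_natCast, map_ofNat, map_one]
    linear_combination -legendreP_differential_equation l
  rw [laplacian_homogeneousZonal he _ _ hz, polynomial_eq_zero]
  simp [homogeneousZonal]

end HomogeneousZonal

/-! ## Expansion of exterior harmonic functions and their boundary derivatives -/

section Exterior

open InnerProductSpace Topology
open scoped Laplacian

theorem hasDerivWithinAt_tsum {ι 𝕜 G : Type*} [NontriviallyNormedField 𝕜] [NormedAddCommGroup G]
    [NormedSpace 𝕜 G] [CompleteSpace G] {f : ι → 𝕜 → G} {f' : ι → G} {b : ι → ℝ} {s : Set 𝕜}
    {x : 𝕜} (hb : Summable b) (hx : Summable fun i => f i x)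
    (hf : ∀ i, HasDerivWithinAt (f i) (f' i) s x)
    (lipschitz : ∀ i, ∀ y ∈ s, ‖f i y - f i x‖ ≤ b i * ‖y - x‖) :
    HasDerivWithinAt (fun y => ∑' i, f i y) (∑' i, f' i) s x := by
  rw [hasDerivWithinAt_iff_tendsto_slope]
  have slope_eq {y : 𝕜} (hy : y ∈ s) :
      slope (fun y => ∑' i, f i y) x y = ∑' i, slope (f i) x y := by
    have summable_sub : Summable fun i => f i y - f i x :=
      .of_norm_bounded (hb.mul_right _) fun i => lipschitz i y hy
    have summable : Summable fun i => f i y := by simpa using summable_sub.add hx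
    simp only [slope_def_module, ← summable.tsum_sub hx, ← summable_sub.tsum_const_smul]
  have tendsto_tsum : Tendsto (fun y => ∑' i, slope (f i) x y) (𝓝[s \ {x}] x)
      (𝓝 (∑' i, f' i)) := by
    refine tendsto_tsum_of_dominated_convergence hb
      (fun i => hasDerivWithinAt_iff_tendsto_slope.mp (hf i)) ?_
    filter_upwards [self_mem_nhdsWithin] with y hy i
    rw [slope_def_module, norm_smul, norm_inv,
      inv_mul_le_iff₀ (norm_pos_iff.mpr (sub_ne_zero.mpr hy.2)), mul_comm]
    exact lipschitz i y hy.1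
  refine tendsto_tsum.congr' ?_
  filter_upwards [self_mem_nhdsWithin] with y hy using (slope_eq hy.1).symm

theorem norm_sphCoord (θ φ : ℝ) : ‖sphCoord θ φ‖ = 1 := by
  have norm_sq : ‖sphCoord θ φ‖ ^ 2 =
      (cos θ * cos φ) ^ 2 + (cos θ * sin φ) ^ 2 + sin θ ^ 2 := by
    rw [EuclideanSpace.real_norm_sq_eq, Fin.sum_univ_three]
    rfl
  rw [← pow_eq_one_iff_of_nonneg (norm_nonneg _) two_ne_zero, norm_sq]
  linear_combination cos θ ^ 2 * sin_sq_add_cos_sq φ + sin_sq_add_cos_sq θ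

theorem continuous_sphCoord (φ : ℝ) : Continuous fun θ => sphCoord θ φ := by
  refine (PiLp.continuous_toLp 2 _).comp (continuous_pi fun i => ?_)
  fin_cases i
  · exact continuous_cos.mul_const _
  · exact continuous_cos.mul_const _
  · exact continuous_sin

theorem exists_eq_sphCoord {x : EuclideanSpace ℝ (Fin 3)} (hx : ‖x‖ = 1) :
    ∃ θ ∈ Set.Icc (-(π / 2)) (π / 2), ∃ φ, x = sphCoord θ φ := by
  have sum_sq : x 0 ^ 2 + x 1 ^ 2 + x 2 ^ 2 = 1 := by
    rw [← Fin.sum_univ_three fun i => x i ^ 2, ← EuclideanSpace.real_norm_sq_eq, hx, one_pow]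
  let z : ℂ := ⟨x 0, x 1⟩
  have norm_z_sq : ‖z‖ ^ 2 = x 0 ^ 2 + x 1 ^ 2 := by
    rw [← Complex.normSq_eq_norm_sq, Complex.normSq_mk]
    ring
  have cos_latitude : cos (arcsin (x 2)) = ‖z‖ := by
    rw [cos_arcsin, ← Real.sqrt_sq (norm_nonneg z), norm_z_sq]
    congr 1
    linarith
  have sin_latitude : sin (arcsin (x 2)) = x 2 :=
    sin_arcsin (by nlinarith [sq_nonneg ‖z‖]) (by nlinarith [sq_nonneg ‖z‖])
  refine ⟨arcsin (x 2), arcsin_mem_Icc _, z.arg, ?_⟩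
  ext i
  fin_cases i
  · simp [sphCoord, cos_latitude, Complex.norm_mul_cos_arg, z]
  · simp [sphCoord, cos_latitude, Complex.norm_mul_sin_arg, z]
  · simp [sphCoord, sin_latitude]

theorem extDomain_eq_compl : extDomain = (Metric.closedBall 0 1)ᶜ := by
  ext x
  simp [extDomain]

theorem isOpen_extDomain : IsOpen extDomain :=
  extDomain_eq_compl ▸ Metric.isClosed_closedBall.isOpen_compl

theorem closure_extDomain : closure extDomain = closedExt := by
  rw [extDomain_eq_compl, closure_compl, interior_closedBall _ one_ne_zero]
  ext x
  simp [closedExt]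

theorem frontier_extDomain : frontier extDomain = Metric.sphere 0 1 := by
  rw [extDomain_eq_compl, frontier_compl, frontier_closedBall _ one_ne_zero]

theorem lap_eq_laplacian {u : EuclideanSpace ℝ (Fin 3) → ℝ} {x : EuclideanSpace ℝ (Fin 3)}
    (hu : ContDiffAt ℝ 2 u x) : lap u x = Δ u x := by
  have differentiableAt_fderiv : DifferentiableAt ℝ (fderiv ℝ u) x :=
    (hu.fderiv_right (m := 1) le_rfl).differentiableAt one_ne_zero
  rw [laplacian_eq_iteratedFDeriv_orthonormalBasis u (EuclideanSpace.basisFun (Fin 3) ℝ)]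
  refine Finset.sum_congr rfl fun i _ => ?_
  rw [iteratedFDeriv_two_apply, fderiv_clm_apply differentiableAt_fderiv
    (differentiableAt_const _)]
  simp

theorem isDecayingHarmonicOn_extDomain {u : EuclideanSpace ℝ (Fin 3) → ℝ}
    (contDiffOn : ContDiffOn ℝ 2 u extDomain) (lap_eq_zero : ∀ x ∈ extDomain, lap u x = 0)
    (continuousOn : ContinuousOn u closedExt)
    (tendsto_zero : Tendsto u (Bornology.cobounded _) (𝓝 0)) :
    IsDecayingHarmonicOn u extDomain := by
  refine ⟨⟨fun x hx => ?_, closure_extDomain ▸ continuousOn⟩, tendsto_zero⟩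
  have contDiffAt {y} (hy : y ∈ extDomain) := contDiffOn.contDiffAt (isOpen_extDomain.mem_nhds hy)
  refine ⟨contDiffAt hx, ?_⟩
  filter_upwards [isOpen_extDomain.mem_nhds hx] with y hy
  rw [← lap_eq_laplacian (contDiffAt hy), lap_eq_zero y hy, Pi.zero_apply]

/-- The decaying solid harmonic that restricts to `Y_l^0` on the unit sphere. -/
def solidZonal (l : ℕ) : EuclideanSpace ℝ (Fin 3) → ℝ :=
  alphaY l 0 • homogeneousZonal (EuclideanSpace.single 2 1) (l + 1) (legendreP l)

theorem isDecayingHarmonicOn_solidZonal (l : ℕ) :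
    IsDecayingHarmonicOn (solidZonal l) extDomain := by
  have norm_axis : ‖(EuclideanSpace.single 2 1 : EuclideanSpace ℝ (Fin 3))‖ = 1 := by simp
  refine IsDecayingHarmonicOn.const_smul _ ⟨HarmonicOnNhd.harmonicContOnCl fun y hy => ?_, ?_⟩
  · refine harmonicAt_homogeneousZonal_legendreP (by simp) norm_axis l ?_
    rintro rfl
    rw [closure_extDomain] at hy
    have one_le_norm : (1 : ℝ) ≤ ‖(0 : EuclideanSpace ℝ (Fin 3))‖ := hy
    exact one_pos.not_ge (one_le_norm.trans_eq norm_zero)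
  · refine squeeze_zero_norm (abs_homogeneousZonal_legendreP_le norm_axis _ l) ?_
    simpa using (tendsto_inv_atTop_zero.comp tendsto_norm_cobounded_atTop).pow (l + 1)

theorem solidZonal_smul_sphCoord (l : ℕ) {r : ℝ} (hr : 0 < r) (θ φ : ℝ) :
    solidZonal l (r • sphCoord θ φ) = r⁻¹ ^ (l + 1) * zonalHarmonic l θ := by
  have norm_eq : ‖r • sphCoord θ φ‖ = r := by simp [norm_smul, norm_sphCoord, hr.le]
  have inner_eq : inner ℝ (EuclideanSpace.single 2 1) (r • sphCoord θ φ) = r * sin θ := by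
    simp [sphCoord, EuclideanSpace.inner_single_left]
  rw [solidZonal, Pi.smul_apply, smul_eq_mul, homogeneousZonal, norm_eq, inner_eq,
    mul_right_comm, mul_inv_cancel₀ hr.ne', one_mul, zonalHarmonic, mul_left_comm]

theorem solidZonal_sphCoord (l : ℕ) (θ φ : ℝ) :
    solidZonal l (sphCoord θ φ) = zonalHarmonic l θ := by
  simpa using solidZonal_smul_sphCoord l one_pos θ φ

/-- The zonal coefficients of the trace of `u` on the meridian of longitude zero. -/
def traceCoeff (u : EuclideanSpace ℝ (Fin 3) → ℝ) : ℕ → ℝ :=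
  zonalCoeff fun t => u (sphCoord t 0)

variable {u v : EuclideanSpace ℝ (Fin 3) → ℝ}

theorem continuous_trace (hu : IsDecayingHarmonicOn u extDomain) (φ : ℝ) :
    Continuous fun t => u (sphCoord t φ) :=
  hu.harmonicContOnCl.continuousOn.comp_continuous (continuous_sphCoord φ) fun t => by
    rw [closure_extDomain]
    exact (norm_sphCoord t φ).ge

theorem traceCoeff_sub (hu : IsDecayingHarmonicOn u extDomain)
    (hv : IsDecayingHarmonicOn v extDomain) :
    traceCoeff (u - v) = traceCoeff u - traceCoeff v :=
  zonalCoeff_sub (continuous_trace hu 0) (continuous_trace hv 0)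

theorem eqOn_tsum_solidZonal (hu : IsDecayingHarmonicOn u extDomain) (hax : Axial (traceR u))
    (ha : Majorized (traceCoeff u)) :
    Set.EqOn u (fun x => ∑' l, traceCoeff u l * solidZonal l x) closedExt := by
  rw [← closure_extDomain]
  have mem_sphere {x} (hx : x ∈ frontier extDomain) : ‖x‖ = 1 := by
    simpa [frontier_extDomain] using hx
  refine hu.eqOn_closure_tsum (fun l => (isDecayingHarmonicOn_solidZonal l).const_smul _) ha
    (fun l x hx => ?_) fun x hx => ?_
  · obtain ⟨θ, -, φ, rfl⟩ := exists_eq_sphCoord (mem_sphere hx)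
    simpa [solidZonal_sphCoord] using abs_mul_zonalHarmonic_le (traceCoeff u) l θ
  · obtain ⟨θ, hθ, φ, rfl⟩ := exists_eq_sphCoord (mem_sphere hx)
    have axial : u (sphCoord θ φ) = u (sphCoord θ 0) := Complex.ofReal_injective (hax θ φ 0)
    simpa [axial, solidZonal_sphCoord, traceCoeff]
      using eqOn_tsum_zonalCoeff_mul (continuous_trace hu 0) ha hθ

theorem apply_smul_sphCoord_eq_tsum (hu : IsDecayingHarmonicOn u extDomain)
    (hax : Axial (traceR u)) (ha : Majorized (traceCoeff u)) {r : ℝ} (hr : 1 ≤ r) (θ φ : ℝ) :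
    u (r • sphCoord θ φ) = ∑' l, traceCoeff u l * (r⁻¹ ^ (l + 1) * zonalHarmonic l θ) := by
  have mem : r • sphCoord θ φ ∈ closedExt := by
    simpa [closedExt, norm_smul, norm_sphCoord] using hr.trans (le_abs_self r)
  simpa only [solidZonal_smul_sphCoord _ (one_pos.trans_le hr)]
    using eqOn_tsum_solidZonal hu hax ha mem

theorem thetaDeriv_eq_tsum (hu : IsDecayingHarmonicOn u extDomain) (hax : Axial (traceR u))
    (ha : Majorized (traceCoeff u)) (θ φ : ℝ) :
    thetaDeriv u θ φ = ∑' l, traceCoeff u l * zonalHarmonicDeriv l θ := by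
  have trace_eq : (fun t => u (sphCoord t φ)) = fun t => ∑' l, traceCoeff u l * zonalHarmonic l t :=
    funext fun t => by simpa using apply_smul_sphCoord_eq_tsum hu hax ha le_rfl t φ
  rw [thetaDeriv, trace_eq]
  exact (hasDerivAt_tsum ha (fun l t => (hasDerivAt_zonalHarmonic l t).const_mul _)
    (isDerivativeFamily_zonalHarmonicDeriv.abs_mul_le _)
    (.of_norm_bounded ha fun l => abs_mul_zonalHarmonic_le _ l 0) θ).deriv

theorem abs_inv_pow_sub_one_le (n : ℕ) {r : ℝ} (hr : 1 ≤ r) : |r⁻¹ ^ n - 1| ≤ n * (r - 1) := by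
  have inv_le_one : r⁻¹ ≤ 1 := inv_le_one_of_one_le₀ hr
  have inv_nonneg : 0 ≤ r⁻¹ := by positivity
  have one_sub_inv_le : 1 - r⁻¹ ≤ r - 1 :=
    calc 1 - r⁻¹ = r⁻¹ * (r - 1) := by field_simp
      _ ≤ r - 1 := mul_le_of_le_one_left (sub_nonneg.mpr hr) inv_le_one
  have bernoulli : 1 + n * (r⁻¹ - 1) ≤ r⁻¹ ^ n := one_add_mul_sub_le_pow (by linarith) n
  rw [abs_sub_comm, abs_of_nonneg (sub_nonneg.mpr (pow_le_one₀ inv_nonneg inv_le_one))]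
  calc 1 - r⁻¹ ^ n ≤ n * (1 - r⁻¹) := by linarith
    _ ≤ n * (r - 1) := by gcongr

theorem norm_mul_inv_pow_mul_zonalHarmonic_sub_le (a : ℕ → ℝ) (l : ℕ) (θ : ℝ) {r : ℝ} (hr : 1 ≤ r) :
    ‖a l * (r⁻¹ ^ (l + 1) * zonalHarmonic l θ) - a l * (1⁻¹ ^ (l + 1) * zonalHarmonic l θ)‖ ≤
      ((l : ℝ) + 1) ^ (3 / 2 : ℝ) * |a l| * ‖r - 1‖ :=
  calc ‖a l * (r⁻¹ ^ (l + 1) * zonalHarmonic l θ) - a l * (1⁻¹ ^ (l + 1) * zonalHarmonic l θ)‖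
      = |r⁻¹ ^ (l + 1) - 1| * |a l * zonalHarmonic l θ| := by
        rw [inv_one, one_pow, ← mul_sub, ← sub_mul, mul_left_comm, norm_mul, norm_eq_abs,
          norm_eq_abs]
    _ ≤ (l + 1 : ℕ) * (r - 1) * |a l * zonalHarmonic l θ| := by
        gcongr
        exact abs_inv_pow_sub_one_le _ hr
    _ = |a l * ((l + 1) * zonalHarmonic l θ)| * ‖r - 1‖ := by
        rw [mul_left_comm _ ((l : ℝ) + 1), abs_mul ((l : ℝ) + 1),
          abs_of_nonneg (by positivity : (0 : ℝ) ≤ l + 1), norm_eq_abs,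
          abs_of_nonneg (sub_nonneg.mpr hr)]
        push_cast
        ring
    _ ≤ _ := by
        gcongr
        exact isDerivativeFamily_mul_zonalHarmonic.abs_mul_le _ l θ

theorem radialDeriv_eq_neg_tsum (hu : IsDecayingHarmonicOn u extDomain) (hax : Axial (traceR u))
    (ha : Majorized (traceCoeff u)) (θ φ : ℝ) :
    radialDeriv u θ φ = -∑' l, traceCoeff u l * (((l : ℝ) + 1) * zonalHarmonic l θ) := by
  have hasDerivAt_inv_pow (n : ℕ) : HasDerivAt (fun r : ℝ => r⁻¹ ^ n) (-(n : ℝ)) 1 := by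
    simpa using (hasDerivAt_inv (one_ne_zero (α := ℝ))).fun_pow n
  have hasDerivWithinAt_series : HasDerivWithinAt
      (fun r : ℝ => ∑' l, traceCoeff u l * (r⁻¹ ^ (l + 1) * zonalHarmonic l θ))
      (∑' l, traceCoeff u l * (-((l + 1 : ℕ) : ℝ) * zonalHarmonic l θ)) (Set.Ici 1) 1 := by
    refine hasDerivWithinAt_tsum ha
      (.of_norm_bounded ha fun l => by simpa using abs_mul_zonalHarmonic_le _ l θ)
      (fun l => (((hasDerivAt_inv_pow (l + 1)).mul_const _).const_mul _).hasDerivWithinAt)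
      fun l r hr => norm_mul_inv_pow_mul_zonalHarmonic_sub_le _ l θ hr
  have eqOn_series : Set.EqOn (fun r : ℝ => u (r • sphCoord θ φ))
      (fun r => ∑' l, traceCoeff u l * (r⁻¹ ^ (l + 1) * zonalHarmonic l θ)) (Set.Ici 1) :=
    fun r hr => apply_smul_sphCoord_eq_tsum hu hax ha hr θ φ
  rw [radialDeriv, derivWithin_congr eqOn_series (eqOn_series Set.self_mem_Ici),
    hasDerivWithinAt_series.derivWithin (uniqueDiffWithinAt_Ici 1), ← tsum_neg]
  refine tsum_congr fun l => ?_
  push_cast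
  ring

end Exterior

/-! ## Sobolev norms of axially symmetric functions -/

section AxialSobolev

theorem integral_conj_exp_I_mul_eq_zero {m : ℤ} (hm : m ≠ 0) :
    ∫ φ in Set.Ico (-π) π, (starRingEnd ℂ) (Complex.exp (Complex.I * m * φ)) = 0 := by
  have conj_exp (φ : ℝ) : (starRingEnd ℂ) (Complex.exp (Complex.I * m * φ)) =
      Complex.exp (-(Complex.I * m) * φ) := by
    simp [← Complex.exp_conj]
  have periodic : Complex.exp (-(Complex.I * m) * (π : ℝ)) =
      Complex.exp (-(Complex.I * m) * ((-π : ℝ) : ℂ)) := by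
    refine Complex.exp_eq_exp_iff_exists_int.mpr ⟨-m, ?_⟩
    push_cast
    ring
  simp only [conj_exp]
  rw [integral_Ico_eq_integral_Ioc, ← intervalIntegral.integral_of_le (by linarith [pi_pos]),
    integral_exp_mul_complex (by simp [hm]), periodic, sub_self, zero_div]

theorem flCoeff_ofReal_eq_zero (F : ℝ → ℝ) (l : ℕ) {m : ℤ} (hm : m ≠ 0) :
    flCoeff (fun θ _ => (F θ : ℂ)) l m = 0 := by
  simp only [flCoeff, Ylm, map_mul, Complex.conj_ofReal, ← mul_assoc, ← Complex.ofReal_mul]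
  rw [sphereMeasure_eq_prod, integral_prod_mul
    (fun θ => ((F θ * alphaY l m * assocLegendre l m.natAbs (sin θ) : ℝ) : ℂ))
    (fun φ : ℝ => (starRingEnd ℂ) (Complex.exp (Complex.I * m * φ))),
    integral_conj_exp_I_mul_eq_zero hm, mul_zero]

theorem Ylm_zero (l : ℕ) (θ φ : ℝ) : Ylm l 0 θ φ = zonalHarmonic l θ := by
  simp [Ylm, assocLegendre, zonalHarmonic]

theorem flCoeff_ofReal_zero (F : ℝ → ℝ) (l : ℕ) :
    flCoeff (fun θ _ => (F θ : ℂ)) l 0 = zonalCoeff F l := by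
  simp only [flCoeff, Ylm_zero, Complex.conj_ofReal, ← Complex.ofReal_mul]
  rw [integral_complex_ofReal, zonalCoeff, sphereMeasure_eq_prod,
    integral_fun_fst fun θ => F θ * zonalHarmonic l θ, latitudeMeasure_eq, integral_smul_measure]
  simp [Measure.real, two_mul]

theorem zonalIndex_injective : Function.Injective fun l : ℕ => (l, (0 : ℤ)) :=
  Prod.mk_left_injective 0

theorem flCoeff_ofReal_of_notMem_range (F : ℝ → ℝ) {p : ℕ × ℤ}
    (hp : p ∉ Set.range fun l : ℕ => (l, (0 : ℤ))) :
    flCoeff (fun θ _ => (F θ : ℂ)) p.1 p.2 = 0 :=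
  flCoeff_ofReal_eq_zero F p.1 fun h => hp ⟨p.1, Prod.ext rfl h.symm⟩

theorem summable_flCoeff_ofReal_iff (s : ℝ) (F : ℝ → ℝ) :
    (Summable fun p : ℕ × ℤ =>
      ((p.1 : ℝ) + 1) ^ (2 * s) * ‖flCoeff (fun θ _ => (F θ : ℂ)) p.1 p.2‖ ^ 2) ↔
    SobolevSummable s (zonalCoeff F) := by
  rw [← zonalIndex_injective.summable_iff fun p hp => by
    simp [flCoeff_ofReal_of_notMem_range F hp]]
  simp [SobolevSummable, Function.comp_def, flCoeff_ofReal_zero]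

theorem HsNorm_ofReal (s : ℝ) (F : ℝ → ℝ) :
    HsNorm s (fun θ _ => (F θ : ℂ)) = sobolevNorm s (zonalCoeff F) := by
  rw [HsNorm, ← zonalIndex_injective.tsum_eq (Function.support_subset_iff'.mpr fun p hp => by
    simp [flCoeff_ofReal_of_notMem_range F hp])]
  simp [sobolevNorm, flCoeff_ofReal_zero]

theorem memHs_ofReal_iff {s : ℝ} {F : ℝ → ℝ} (hF : Continuous F) :
    MemHs s (fun θ _ => (F θ : ℂ)) ↔ SobolevSummable s (zonalCoeff F) := by
  rw [← summable_flCoeff_ofReal_iff]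
  refine ⟨And.right, And.intro ?_⟩
  have memLp : MemLp (fun θ => (F θ : ℂ)) 2 sphereMeasure.fst :=
    ((memLp_two_iff_integrable_sq hF.aestronglyMeasurable).mpr
      (integrable_latitudeMeasure (hF.pow 2))).ofReal
  exact memLp.comp_measurePreserving ⟨measurable_fst, rfl⟩

end AxialSobolev

/-! ## The squared gradient -/

section Gradient

variable {s : ℝ} {a b : ℕ → ℝ}

/-- The product `∇u · ∇v` at latitude `t` of the unit sphere, for the decaying axially symmetric
harmonic functions `u` and `v` whose traces have the zonal coefficients `a` and `b`. -/
def gradientProduct (a b : ℕ → ℝ) (t : ℝ) : ℝ :=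
  (∑' l, a l * ((l + 1) * zonalHarmonic l t)) * (∑' l, b l * ((l + 1) * zonalHarmonic l t)) +
    (∑' l, a l * zonalHarmonicDeriv l t) * ∑' l, b l * zonalHarmonicDeriv l t

theorem continuous_gradientProduct (ha : Majorized a) (hb : Majorized b) :
    Continuous (gradientProduct a b) :=
  ((isDerivativeFamily_mul_zonalHarmonic.continuous_tsum ha).mul
    (isDerivativeFamily_mul_zonalHarmonic.continuous_tsum hb)).add
  ((isDerivativeFamily_zonalHarmonicDeriv.continuous_tsum ha).mul
    (isDerivativeFamily_zonalHarmonicDeriv.continuous_tsum hb))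

theorem gradientProduct_self_sub_self (ha : Majorized a) (hb : Majorized b) :
    gradientProduct a a - gradientProduct b b = gradientProduct (a + b) (a - b) := by
  funext t
  simp only [gradientProduct, Pi.sub_apply (f := gradientProduct _ _),
    isDerivativeFamily_mul_zonalHarmonic.tsum_add_mul ha hb,
    isDerivativeFamily_mul_zonalHarmonic.tsum_sub_mul ha hb,
    isDerivativeFamily_zonalHarmonicDeriv.tsum_add_mul ha hb,
    isDerivativeFamily_zonalHarmonicDeriv.tsum_sub_mul ha hb]
  ring

theorem sobolevNorm_zonalCoeff_gradientProduct_le (hs : 1 < s) (ha : SobolevSummable (s + 1) a)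
    (hb : SobolevSummable (s + 1) b) :
    SobolevSummable s (zonalCoeff (gradientProduct a b)) ∧
      sobolevNorm s (zonalCoeff (gradientProduct a b)) ≤
        2 ^ (s + 2) * embeddingConstant s * sobolevNorm (s + 1) a * sobolevNorm (s + 1) b := by
  have ha' := (ha.majorant_le hs).1
  have hb' := (hb.majorant_le hs).1
  obtain ⟨radial_summable, radial_le⟩ :=
    isDerivativeFamily_mul_zonalHarmonic.sobolevNorm_integral_tsum_mul_tsum_le
      isContinuousOrthonormal_zonalHarmonic (fun _ => integrable_latitudeMeasure) hs ha hb
  obtain ⟨angular_summable, angular_le⟩ :=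
    isDerivativeFamily_zonalHarmonicDeriv.sobolevNorm_integral_tsum_mul_tsum_le
      isContinuousOrthonormal_zonalHarmonic (fun _ => integrable_latitudeMeasure) hs ha hb
  obtain ⟨sum_summable, sum_le⟩ := radial_summable.add angular_summable
  have radial_continuous {c : ℕ → ℝ} (hc : Majorized c) :=
    isDerivativeFamily_mul_zonalHarmonic.continuous_tsum hc
  have angular_continuous {c : ℕ → ℝ} (hc : Majorized c) :=
    isDerivativeFamily_zonalHarmonicDeriv.continuous_tsum hc
  have split : zonalCoeff (gradientProduct a b) = _ + _ :=
    zonalCoeff_add ((radial_continuous ha').mul (radial_continuous hb'))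
      ((angular_continuous ha').mul (angular_continuous hb'))
  rw [split]
  refine ⟨sum_summable, sum_le.trans ?_⟩
  have two_pow : (2 : ℝ) ^ (s + 2) = 2 * 2 ^ (s + 1) := by
    rw [← Real.rpow_one_add' two_pos.le (by linarith)]
    congr 1
    ring
  linear_combination radial_le + angular_le -
    embeddingConstant s * sobolevNorm (s + 1) a * sobolevNorm (s + 1) b * two_pow

/-- Functions on the exterior of the unit sphere that are harmonic and continuous up to the sphere,
decay at infinity, and have an axially symmetric trace in `H^σ(𝕊)`. -/
structure IsAxialSobolevHarmonic (σ : ℝ) (u : EuclideanSpace ℝ (Fin 3) → ℝ) : Prop where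
  isDecayingHarmonicOn : IsDecayingHarmonicOn u extDomain
  memHs_trace : MemHs σ (traceR u)
  axial_trace : Axial (traceR u)

namespace IsAxialSobolevHarmonic

variable {u v : EuclideanSpace ℝ (Fin 3) → ℝ}

theorem traceR_eq (hu : IsAxialSobolevHarmonic s u) :
    traceR u = fun θ _ => (u (sphCoord θ 0) : ℂ) :=
  funext₂ fun θ φ => hu.axial_trace θ φ 0

theorem sobolevSummable_traceCoeff (hu : IsAxialSobolevHarmonic s u) :
    SobolevSummable s (traceCoeff u) :=
  (memHs_ofReal_iff (continuous_trace hu.isDecayingHarmonicOn 0)).mp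
    (hu.traceR_eq ▸ hu.memHs_trace)

theorem HsNorm_traceR (hu : IsAxialSobolevHarmonic s u) :
    HsNorm s (traceR u) = sobolevNorm s (traceCoeff u) := by
  rw [hu.traceR_eq, HsNorm_ofReal, traceCoeff]

theorem HsNorm_traceR_sub (hu : IsAxialSobolevHarmonic s u) (hv : IsAxialSobolevHarmonic s v) :
    HsNorm s (fun θ φ => traceR u θ φ - traceR v θ φ) =
      sobolevNorm s (traceCoeff u - traceCoeff v) := by
  rw [hu.traceR_eq, hv.traceR_eq,
    ← traceCoeff_sub hu.isDecayingHarmonicOn hv.isDecayingHarmonicOn, traceCoeff, ← HsNorm_ofReal]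
  simp

theorem majorized_traceCoeff (hs : 1 < s) (hu : IsAxialSobolevHarmonic (s + 1) u) :
    Majorized (traceCoeff u) :=
  (hu.sobolevSummable_traceCoeff.majorant_le hs).1

theorem gradSqS_eq (hs : 1 < s) (hu : IsAxialSobolevHarmonic (s + 1) u) :
    gradSqS u = fun θ _ => (gradientProduct (traceCoeff u) (traceCoeff u) θ : ℂ) := by
  have ha := hu.majorized_traceCoeff hs
  funext θ φ
  rw [gradSqS, radialDeriv_eq_neg_tsum hu.isDecayingHarmonicOn hu.axial_trace ha,
    thetaDeriv_eq_tsum hu.isDecayingHarmonicOn hu.axial_trace ha, neg_sq, gradientProduct, sq, sq]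

theorem memHs_gradSqS (hs : 1 < s) (hu : IsAxialSobolevHarmonic (s + 1) u) :
    MemHs s (gradSqS u) := by
  have ha := hu.majorized_traceCoeff hs
  have summable := hu.sobolevSummable_traceCoeff
  rw [hu.gradSqS_eq hs, memHs_ofReal_iff (continuous_gradientProduct ha ha)]
  exact (sobolevNorm_zonalCoeff_gradientProduct_le hs summable summable).1

theorem axial_gradSqS (hs : 1 < s) (hu : IsAxialSobolevHarmonic (s + 1) u) :
    Axial (gradSqS u) := by
  rw [hu.gradSqS_eq hs]
  exact fun _ _ _ => rfl

theorem HsNorm_gradSqS_le (hs : 1 < s) (hu : IsAxialSobolevHarmonic (s + 1) u) :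
    HsNorm s (gradSqS u) ≤ 2 ^ (s + 2) * embeddingConstant s * HsNorm (s + 1) (traceR u) ^ 2 := by
  have summable := hu.sobolevSummable_traceCoeff
  rw [hu.gradSqS_eq hs, HsNorm_ofReal, hu.HsNorm_traceR, sq, ← mul_assoc]
  exact (sobolevNorm_zonalCoeff_gradientProduct_le hs summable summable).2

theorem HsNorm_gradSqS_sub_le (hs : 1 < s) (hu : IsAxialSobolevHarmonic (s + 1) u)
    (hv : IsAxialSobolevHarmonic (s + 1) v) :
    HsNorm s (fun θ φ => gradSqS u θ φ - gradSqS v θ φ) ≤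
      2 ^ (s + 2) * embeddingConstant s *
        (HsNorm (s + 1) (traceR u) + HsNorm (s + 1) (traceR v)) *
          HsNorm (s + 1) (fun θ φ => traceR u θ φ - traceR v θ φ) := by
  have difference : (fun θ φ => gradSqS u θ φ - gradSqS v θ φ) = fun θ _ =>
      (gradientProduct (traceCoeff u + traceCoeff v) (traceCoeff u - traceCoeff v) θ : ℂ) := by
    rw [hu.gradSqS_eq hs, hv.gradSqS_eq hs, ← gradientProduct_self_sub_self
      (hu.majorized_traceCoeff hs) (hv.majorized_traceCoeff hs)]
    simp
  have hu' := hu.sobolevSummable_traceCoeff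
  have hv' := hv.sobolevSummable_traceCoeff
  obtain ⟨add_summable, add_le⟩ := hu'.add hv'
  have constant_pos := embeddingConstant_pos hs
  rw [difference, HsNorm_ofReal, hu.HsNorm_traceR, hv.HsNorm_traceR, hu.HsNorm_traceR_sub hv]
  refine (sobolevNorm_zonalCoeff_gradientProduct_le hs add_summable (hu'.sub hv')).2.trans ?_
  gcongr
  exact sobolevNorm_nonneg _ _

end IsAxialSobolevHarmonic

end Gradient

/-- Lemma 4.2: if `u, v` are harmonic in the exterior of the unit
sphere, continuous up to the sphere, vanish at infinity, and have traces in
`H^{s+1}_ax(𝕊)` with `s > 1`, then `|∇u|², |∇v|² ∈ H^s_ax(𝕊)` with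
`‖|∇u|²‖_{H^s} ≤ C ‖u‖²_{H^{s+1}}` and
`‖|∇u|² - |∇v|²‖_{H^s} ≤ C (‖u‖_{H^{s+1}} + ‖v‖_{H^{s+1}}) ‖u - v‖_{H^{s+1}}`. -/
theorem gradient_squared_estimates (s : ℝ) (hs : 1 < s) :
    ∃ C > 0, ∀ u v : EuclideanSpace ℝ (Fin 3) → ℝ,
      ContDiffOn ℝ 2 u extDomain → (∀ x ∈ extDomain, lap u x = 0) →
      ContinuousOn u closedExt → Filter.Tendsto u (Bornology.cobounded _) (nhds 0) →
      MemHs (s + 1) (traceR u) → Axial (traceR u) →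
      ContDiffOn ℝ 2 v extDomain → (∀ x ∈ extDomain, lap v x = 0) →
      ContinuousOn v closedExt → Filter.Tendsto v (Bornology.cobounded _) (nhds 0) →
      MemHs (s + 1) (traceR v) → Axial (traceR v) →
      (MemHs s (gradSqS u) ∧ Axial (gradSqS u)) ∧
      (MemHs s (gradSqS v) ∧ Axial (gradSqS v)) ∧
      HsNorm s (gradSqS u) ≤ C * HsNorm (s + 1) (traceR u) ^ 2 ∧
      HsNorm s (fun θ φ => gradSqS u θ φ - gradSqS v θ φ) ≤
        C * (HsNorm (s + 1) (traceR u) + HsNorm (s + 1) (traceR v)) *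
          HsNorm (s + 1) (fun θ φ => traceR u θ φ - traceR v θ φ) := by
  have constant_pos := embeddingConstant_pos hs
  refine ⟨2 ^ (s + 2) * embeddingConstant s, by positivity, ?_⟩
  intro u v contDiff_u lap_u continuous_u tendsto_u memHs_u axial_u
    contDiff_v lap_v continuous_v tendsto_v memHs_v axial_v
  have hu : IsAxialSobolevHarmonic (s + 1) u :=
    ⟨isDecayingHarmonicOn_extDomain contDiff_u lap_u continuous_u tendsto_u, memHs_u, axial_u⟩
  have hv : IsAxialSobolevHarmonic (s + 1) v :=
    ⟨isDecayingHarmonicOn_extDomain contDiff_v lap_v continuous_v tendsto_v, memHs_v, axial_v⟩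
  exact ⟨⟨hu.memHs_gradSqS hs, hu.axial_gradSqS hs⟩, ⟨hv.memHs_gradSqS hs, hv.axial_gradSqS hs⟩,
    hu.HsNorm_gradSqS_le hs, hu.HsNorm_gradSqS_sub_le hs hv⟩

end
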